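/- arXiv:1204.5154 — 2 statements merged into one kernel-verified Lean document; each statement's English description precedes it below -/
import Mathlib

section
/- Let (γ,σ) be a Lévy pair and let (U_N)_{N≥1} be random column vectors, U_N ∈ ℂ^N, with sup_{N≥1} E[ (‖U_N‖₂² / N)² ] < ∞. For each N let M_N be an N×N random Hermitian matrix whose law satisfies E[exp(i·Tr(A·M_N))] = exp( N · E[ Ψ_{γ,σ}( (U_N)* A U_N / N ) ] ) for every Hermitian A. Then for every function g : ℝ → ℝ that is Lipschitz and of finite total variation, and every ε > 0, there exists δ > 0 such that for all N ≥ 1: P( | (1/N)·Tr g(M_N) − E[(1/N)·Tr g(M_N)] | > ε ) ≤ 2·e^{−N·δ}, where (1/N)·Tr g(M_N) = (1/N)·Σ_{i=1}^N g(λ_i(M_N)) with λ_1(M_N),…,λ_N(M_N) the eigenvalues of M_N. -/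
/-!
The law of `M_N` is a limit of laws of sums of independent rank-one matrices `(x / N) u u*`, and a
linear spectral statistic of such a sum is concentrated because it depends little on each summand.

*Approximation.* Truncating the jumps of `σ` away from `0` and replacing the remaining drift by many
tiny jumps gives finite measures `J_k` with `∫ (exp (i x ξ) - 1) dJ_k(x) → Ψ(ξ)`, the error and the
exponents being bounded by a multiple of `1 + ξ ^ 2` (`norm_poissonExponent_sub_le`,
`tendsto_poissonExponent`). Let `m_k` be large integers, let `x` be `0` except with probability
`J_k(ℝ) / m_k`, when it is drawn from `J_k` normalized, and let `u` be an independent copy of `U_N`.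
The characteristic function of a sum of `m_k N` independent copies of `(x / N) u u*` is
`(1 + c_k / m_k) ^ (m_k N)`, where `c_k → E Ψ(u* A u / N)` by dominated convergence, which uses the
moment assumption. By Lévy's continuity theorem these laws converge weakly to the law of `M_N`
(`tendsto_integral_convPow_stepLaw`).

*One increment.* A rank-one perturbation interlaces the eigenvalues (`eigenvalues_le_of_codim`), so
it changes `Tr g` by at most the total variation of `g`; it also changes it by at most the Lipschitz
constant times the trace norm of the perturbation (`sum_eigenvalues_rankOne`).

*Concentration.* Averaging over one increment after another and using `exp d ≤ 1 + d + d ^ 2` for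
`|d| ≤ 1` bounds `E exp F` by `exp (E F)` times the exponential of the sum of the mean squared
increments (`integral_exp_convPow_le`). For `F = t Tr g` the sum is at most
`C t ^ 2 m_k N ∫ min 1 (x ^ 2) E[1 + (‖u‖ ^ 2 / N) ^ 2]`, where `x` has the jump law. Since
`m_k ∫ min 1 (x ^ 2)` is bounded, this is `O(N t ^ 2)` uniformly in `k`; as `g` is bounded and
continuous, the estimate passes to `M_N` (`integral_exp_linStat_le`). Chernoff's inequality
(`measureReal_le_of_integral_exp_le`) with a small `t` which does not depend on `N` concludes.
-/

open MeasureTheory ProbabilityTheory Matrix Filter Topology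
open scoped ENNReal

noncomputable section

instance matrixMeasurableSpace {m n α : Type*} [MeasurableSpace α] :
    MeasurableSpace (Matrix m n α) :=
  inferInstanceAs (MeasurableSpace (m → n → α))

/-- The integrand of the Lévy–Khintchine formula. -/
def levyKernel (t ξ : ℝ) : ℂ :=
  if t = 0 then -(ξ : ℂ) ^ 2 / 2
  else (Complex.exp (Complex.I * t * ξ) - 1 - Complex.I * t * ξ / (1 + (t : ℂ) ^ 2)) *
      ((1 + (t : ℂ) ^ 2) / (t : ℂ) ^ 2)

/-- The Lévy exponent `Ψ_{γ,σ}` of the Lévy pair `(γ, σ)`. -/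
def levyExponent (γ : ℝ) (σ : Measure ℝ) (ξ : ℝ) : ℂ :=
  Complex.I * γ * ξ + ∫ t, levyKernel t ξ ∂σ

/-- The `i`-th entry (`0`-indexed) of the vector `U N ω`, extended by `0`. -/
def entry {Ω : Type*} (U : (N : ℕ) → Ω → Fin N → ℂ) (N : ℕ) (ω : Ω) (i : ℕ) : ℂ :=
  if h : i < N then U N ω ⟨i, h⟩ else 0

/-- Hypothesis (Γ): the entries of `U N` are exchangeable with all moments finite,
the joint moments are `O(N^{p-d})`, and the normalized absolute moments converge to `Γ`,
which is moreover bounded by `C^{n₁+⋯+n_k}`. -/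
structure HypGamma {Ω : Type*} [MeasurableSpace Ω] (P : Measure Ω)
    (U : (N : ℕ) → Ω → Fin N → ℂ)
    (Γ : (k : ℕ) → (Fin k → ℕ) → ℝ) : Prop where
  meas : ∀ N, Measurable (U N)
  exchangeable : ∀ N (e : Equiv.Perm (Fin N)),
    Measure.map (fun ω => fun i => U N ω (e i)) P = Measure.map (U N) P
  moments : ∀ N (i : Fin N) (k : ℕ), Integrable (fun ω => ‖U N ω i‖ ^ k) P
  momBound : ∀ p : ℕ, 1 ≤ p → ∀ idx₁ idx₂ : Fin p → ℕ, ∃ C : ℝ, ∀ᶠ N in atTop,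
    ‖∫ ω, (∏ j : Fin p, entry U N ω (idx₁ j)) *
        ∏ j : Fin p, (starRingEnd ℂ) (entry U N ω (idx₂ j)) ∂P‖ ≤
      C * (N : ℝ) ^ ((p : ℤ) - ((Finset.univ.image idx₁ ∪ Finset.univ.image idx₂).card : ℤ))
  gammaLim : ∀ k : ℕ, 1 ≤ k → ∀ n : Fin k → ℕ, (∀ j, 1 ≤ n j) →
    Tendsto (fun N => ∫ ω, ∏ j : Fin k,
        (‖entry U N ω j‖ ^ (2 * n j) / (N : ℝ) ^ (n j - 1)) ∂P) atTop (𝓝 (Γ k n))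
  gammaSymm : ∀ k (n : Fin k → ℕ) (e : Equiv.Perm (Fin k)), Γ k (n ∘ e) = Γ k n
  gammaBound : ∃ C : ℝ, ∀ k : ℕ, 1 ≤ k → ∀ n : Fin k → ℕ, (∀ j, 1 ≤ n j) →
    Γ k n ≤ C ^ (∑ j, n j)

/-- The empirical spectral distribution of a Hermitian matrix. -/
def ESD {N : ℕ} {M : Matrix (Fin N) (Fin N) ℂ} (hM : M.IsHermitian) : Measure ℝ :=
  (N : ℝ≥0∞)⁻¹ • ∑ i : Fin N, Measure.dirac (hM.eigenvalues i)

/-- Weak convergence of a sequence of measures on `ℝ`, tested against bounded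
continuous functions. -/
def TendstoWeakly (μs : ℕ → Measure ℝ) (μ : Measure ℝ) : Prop :=
  ∀ f : BoundedContinuousFunction ℝ ℝ,
    Tendsto (fun n => ∫ x, f x ∂(μs n)) atTop (𝓝 (∫ x, f x ∂μ))

/-- The law of `M N` is `P_{U_N}^{(μ)}` where `μ` has Lévy pair `(γ, σ)`: the Fourier
transform of `M N` is `A ↦ exp(N E[Ψ_{γ,σ}(U_N* A U_N / N)])`. -/
def HasMatrixLaw {Ω : Type*} [MeasurableSpace Ω] (P : Measure Ω) (γ : ℝ) (σ : Measure ℝ)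
    (U : (N : ℕ) → Ω → Fin N → ℂ)
    (M : (N : ℕ) → Ω → Matrix (Fin N) (Fin N) ℂ) : Prop :=
  ∀ N, 1 ≤ N → ∀ A : Matrix (Fin N) (Fin N) ℂ, A.IsHermitian →
    ∫ ω, Complex.exp (Complex.I * (A * M N ω).trace) ∂P =
      Complex.exp ((N : ℂ) *
        ∫ ω, levyExponent γ σ ((star (U N ω) ⬝ᵥ A.mulVec (U N ω)).re / N) ∂P)

/-! ### Weyl's inequality and rank-one perturbations -/

/-- The quadratic form of a symmetric operator in its eigenbasis. -/
lemma re_inner_eq_sum_eigenvalues {E : Type*} [NormedAddCommGroup E] [InnerProductSpace ℂ E]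
    [FiniteDimensional ℂ E] {n : ℕ} {T : E →ₗ[ℂ] E} (hT : T.IsSymmetric)
    (hn : Module.finrank ℂ E = n) (x : E) :
    (inner ℂ (T x) x).re
      = ∑ k, hT.eigenvalues hn k * ‖(hT.eigenvectorBasis hn).repr x k‖ ^ 2 := by
  rw [← (hT.eigenvectorBasis hn).repr.inner_map_map, PiLp.inner_apply, Complex.re_sum]
  refine Finset.sum_congr rfl fun k _ => ?_
  rw [hT.eigenvectorBasis_apply_self_apply hn]
  set z := (hT.eigenvectorBasis hn).repr x k
  rw [← Complex.normSq_eq_norm_sq, Complex.normSq_apply]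
  simp only [RCLike.inner_apply, map_mul, Complex.mul_re, Complex.mul_im]
  simp
  ring

lemma norm_sq_eq_sum_repr {E : Type*} [NormedAddCommGroup E] [InnerProductSpace ℂ E]
    {n : ℕ} (b : OrthonormalBasis (Fin n) ℂ E) (x : E) :
    ‖x‖ ^ 2 = ∑ k, ‖b.repr x k‖ ^ 2 := by
  rw [← b.repr.norm_map, EuclideanSpace.norm_sq_eq]

/-- Weyl's inequality in the form needed here: if `S ≤ T + c` as quadratic forms on a subspace
of codimension at most `r`, then `λ_{i+r}(S) ≤ λ_i(T) + c` for the decreasingly ordered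
eigenvalues. A dimension count gives a nonzero vector of the subspace lying both in the span of
the first `i + r + 1` eigenvectors of `S` and in that of the eigenvectors `i, i + 1, …` of `T`. -/
lemma eigenvalues_le_of_codim {E : Type*} [NormedAddCommGroup E] [InnerProductSpace ℂ E]
    [FiniteDimensional ℂ E] {n r : ℕ} {S T : E →ₗ[ℂ] E} (hS : S.IsSymmetric) (hT : T.IsSymmetric)
    (hn : Module.finrank ℂ E = n) (L : E →ₗ[ℂ] (Fin r → ℂ)) (c : ℝ)
    (h : ∀ x, L x = 0 → (inner ℂ (S x) x).re ≤ (inner ℂ (T x) x).re + c * ‖x‖ ^ 2)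
    (i j : Fin n) (hij : (j : ℕ) = i + r) :
    hS.eigenvalues hn j ≤ hT.eigenvalues hn i + c := by
  set e := hS.eigenvectorBasis hn with he
  set f := hT.eigenvectorBasis hn with hf
  let Φ : E →ₗ[ℂ] ((Finset.Iio i → ℂ) × (Finset.Ioi j → ℂ)) × (Fin r → ℂ) :=
    ((LinearMap.pi fun k : Finset.Iio i => (EuclideanSpace.projₗ (𝕜 := ℂ) (k : Fin n)) ∘ₗ
        f.repr.toLinearEquiv.toLinearMap).prod
      (LinearMap.pi fun k : Finset.Ioi j => (EuclideanSpace.projₗ (𝕜 := ℂ) (k : Fin n)) ∘ₗ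
        e.repr.toLinearEquiv.toLinearMap)).prod L
  have hlt : Module.finrank ℂ (((Finset.Iio i → ℂ) × (Finset.Ioi j → ℂ)) × (Fin r → ℂ))
      < Module.finrank ℂ E := by
    simp only [Module.finrank_prod, Module.finrank_fintype_fun_eq_card, Fintype.card_coe,
      Fin.card_Iio, Fin.card_Ioi, Fintype.card_fin, hn]
    have := j.2
    omega
  obtain ⟨x, hxk, hx0⟩ := Submodule.exists_mem_ne_zero_of_ne_bot
    (LinearMap.ker_ne_bot_of_finrank_lt (f := Φ) hlt)
  have hΦ : Φ x = 0 := hxk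
  have h1 : ∀ k : Fin n, k < i → f.repr x k = 0 := fun k hk => by
    have := congrFun (congrArg (fun z => z.1.1) hΦ) ⟨k, Finset.mem_Iio.2 hk⟩
    simpa [Φ] using this
  have h2 : ∀ k : Fin n, j < k → e.repr x k = 0 := fun k hk => by
    have := congrFun (congrArg (fun z => z.1.2) hΦ) ⟨k, Finset.mem_Ioi.2 hk⟩
    simpa [Φ] using this
  have h3 : L x = 0 := congrArg Prod.snd hΦ
  have hxpos : 0 < ‖x‖ ^ 2 := by positivity
  have hA : hS.eigenvalues hn j * ‖x‖ ^ 2 ≤ (inner ℂ (S x) x).re := by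
    rw [re_inner_eq_sum_eigenvalues hS hn, norm_sq_eq_sum_repr e, Finset.mul_sum]
    refine Finset.sum_le_sum fun k _ => ?_
    rcases le_or_gt k j with hk | hk
    · exact mul_le_mul_of_nonneg_right (hS.eigenvalues_antitone hn hk) (by positivity)
    · simp [← he, h2 k hk]
  have hB : (inner ℂ (T x) x).re ≤ hT.eigenvalues hn i * ‖x‖ ^ 2 := by
    rw [re_inner_eq_sum_eigenvalues hT hn, norm_sq_eq_sum_repr f, Finset.mul_sum]
    refine Finset.sum_le_sum fun k _ => ?_
    rcases le_or_gt i k with hk | hk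
    · exact mul_le_mul_of_nonneg_right (hT.eigenvalues_antitone hn hk) (by positivity)
    · simp [← hf, h1 k hk]
  have := h x h3
  nlinarith

lemma eigenvalues₀_le_of_codim {N r : ℕ} {A B : Matrix (Fin N) (Fin N) ℂ} (hA : A.IsHermitian)
    (hB : B.IsHermitian) (L : EuclideanSpace ℂ (Fin N) →ₗ[ℂ] (Fin r → ℂ)) (c : ℝ)
    (h : ∀ x, L x = 0 → (inner ℂ (toEuclideanLin B x) x).re
      ≤ (inner ℂ (toEuclideanLin A x) x).re + c * ‖x‖ ^ 2)
    (i j : Fin (Fintype.card (Fin N))) (hij : (j : ℕ) = i + r) :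
    hB.eigenvalues₀ j ≤ hA.eigenvalues₀ i + c :=
  eigenvalues_le_of_codim _ _ _ L c h i j hij

lemma sum_eigenvalues_eq {N : ℕ} {A : Matrix (Fin N) (Fin N) ℂ} (hA : A.IsHermitian)
    (g : ℝ → ℝ) : ∑ i, g (hA.eigenvalues i) = ∑ i, g (hA.eigenvalues₀ i) :=
  Equiv.sum_comp (Fintype.equivOfCardEq (Fintype.card_fin _)).symm
    (fun i => g (hA.eigenvalues₀ i))

lemma inner_vecMulVec {N : ℕ} (w : Fin N → ℂ) (x : EuclideanSpace ℂ (Fin N)) :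
    (inner ℂ (toEuclideanLin (vecMulVec w (star w)) x) x).re
      = ‖inner ℂ (WithLp.toLp 2 w) x‖ ^ 2 := by
  have : toEuclideanLin (vecMulVec w (star w)) x
      = (inner ℂ (WithLp.toLp 2 w) x) • WithLp.toLp 2 w := by
    ext k
    simp [toLpLin_apply, vecMulVec, Matrix.mulVec, dotProduct, PiLp.inner_apply, Finset.sum_mul]
    refine Finset.sum_congr rfl fun l _ => ?_
    ring
  rw [this, inner_smul_left, ← Complex.normSq_eq_conj_mul_self, Complex.normSq_eq_norm_sq,
    Complex.ofReal_re]

/-- Disjoint intervals `[a i, b i]` contribute at most the total variation. -/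
lemma sum_edist_le_eVariationOn (g : ℝ → ℝ) : ∀ (n : ℕ) (a b : Fin n → ℝ) (c : ℝ),
    (∀ i, a i ≤ b i) → (∀ i j, i < j → b j ≤ a i) → (∀ i, c ≤ a i) →
    ∑ i, edist (g (b i)) (g (a i)) ≤ eVariationOn g (Set.Ici c) := by
  intro n
  induction n with
  | zero => intro a b c _ _ _; simp
  | succ n ih =>
    intro a b c hab hba hc
    rw [Fin.sum_univ_castSucc]
    have h1 := ih (fun i => a i.castSucc) (fun i => b i.castSucc) (b (Fin.last n))
      (fun i => hab _) (fun i j hij => hba _ _ (by simpa using hij))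
      (fun i => hba _ _ (Fin.castSucc_lt_last i))
    have h2 : edist (g (b (Fin.last n))) (g (a (Fin.last n)))
        ≤ eVariationOn g (Set.Icc (a (Fin.last n)) (b (Fin.last n))) :=
      eVariationOn.edist_le _ (Set.right_mem_Icc.2 (hab _)) (Set.left_mem_Icc.2 (hab _))
    have h3 := eVariationOn.add_le_union g (s := Set.Icc (a (Fin.last n)) (b (Fin.last n)))
      (t := Set.Ici (b (Fin.last n))) (fun x hx y hy => hx.2.trans hy)
    have h4 : eVariationOn g (Set.Icc (a (Fin.last n)) (b (Fin.last n)) ∪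
        Set.Ici (b (Fin.last n))) ≤ eVariationOn g (Set.Ici c) := by
      refine eVariationOn.mono g (Set.union_subset (fun x hx => (hc _).trans hx.1) ?_)
      exact fun x hx => ((hc _).trans (hab _)).trans hx
    calc _ ≤ _ := add_le_add h1 h2
      _ = _ := add_comm _ _
      _ ≤ _ := h3.trans h4

/-- The case of a positive rank-one perturbation: the eigenvalues of `B` and `A` interlace, so the
intervals between corresponding eigenvalues are disjoint, and their lengths add up to the trace of
the perturbation. -/
lemma sum_eigenvalues_rankOne_aux {N : ℕ} {A B : Matrix (Fin N) (Fin N) ℂ} (hA : A.IsHermitian)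
    (hB : B.IsHermitian) (w : Fin N → ℂ) (hAB : B = A + vecMulVec w (star w))
    {g : ℝ → ℝ} {K : NNReal} (hg : LipschitzWith K g) (hgBV : BoundedVariationOn g Set.univ) :
    |∑ i, g (hB.eigenvalues i) - ∑ i, g (hA.eigenvalues i)|
      ≤ min (eVariationOn g Set.univ).toReal (K * ∑ i, ‖w i‖ ^ 2) := by
  have hq : ∀ x, (inner ℂ (toEuclideanLin B x) x).re
      = (inner ℂ (toEuclideanLin A x) x).re + ‖inner ℂ (WithLp.toLp 2 w) x‖ ^ 2 := fun x => by
    rw [hAB, map_add, LinearMap.add_apply, inner_add_left, Complex.add_re, inner_vecMulVec]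
  have hle : ∀ i, hA.eigenvalues₀ i ≤ hB.eigenvalues₀ i := fun i => by
    have := eigenvalues₀_le_of_codim (r := 0) hB hA 0 0 (fun x _ => by
      rw [hq x]; nlinarith [sq_nonneg ‖inner ℂ (WithLp.toLp 2 w) x‖]) i i (by simp)
    linarith
  have hIn : ∀ i j, i < j → hB.eigenvalues₀ j ≤ hA.eigenvalues₀ i := fun i j hij => by
    let i' : Fin (Fintype.card (Fin N)) := ⟨i + 1, by have := j.2; omega⟩
    have h1 : hB.eigenvalues₀ j ≤ hB.eigenvalues₀ i' :=
      hB.eigenvalues₀_antitone (Fin.mk_le_of_le_val (by simpa using hij))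
    have := eigenvalues₀_le_of_codim (r := 1) hA hB
      (LinearMap.pi fun _ => (innerₛₗ ℂ (WithLp.toLp 2 w))) 0 (fun x hx => by
        have h0 : inner ℂ (WithLp.toLp 2 w) x = 0 := by simpa using congrFun hx 0
        rw [hq x, h0]; simp) i i' rfl
    linarith
  rw [sum_eigenvalues_eq, sum_eigenvalues_eq, ← Finset.sum_sub_distrib]
  refine (Finset.abs_sum_le_sum_abs _ _).trans (le_min ?_ ?_)
  · obtain ⟨c, hc⟩ : ∃ c, ∀ i, c ≤ hA.eigenvalues₀ i := by
      obtain ⟨c, hc⟩ := (Set.finite_range hA.eigenvalues₀).bddBelow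
      exact ⟨c, fun i => hc ⟨i, rfl⟩⟩
    have := (sum_edist_le_eVariationOn g _ _ _ c hle hIn hc).trans
      (eVariationOn.mono g (Set.subset_univ _))
    have h2 := ENNReal.toReal_mono hgBV this
    rw [ENNReal.toReal_sum (fun _ _ => edist_ne_top _ _)] at h2
    simpa [edist_dist, Real.dist_eq] using h2
  · have htr : ∑ i, (hB.eigenvalues₀ i - hA.eigenvalues₀ i) = ∑ i, ‖w i‖ ^ 2 := by
      rw [Finset.sum_sub_distrib, ← sum_eigenvalues_eq hB (fun x => x),
        ← sum_eigenvalues_eq hA (fun x => x)]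
      have h1 := congrArg Complex.re hB.trace_eq_sum_eigenvalues
      have h2 := congrArg Complex.re hA.trace_eq_sum_eigenvalues
      have h4 := congrArg (fun A => (trace A).re) hAB
      simp only [trace_add, Complex.add_re] at h4
      rw [h4, h2] at h1
      have h3 : (vecMulVec w (star w)).trace.re = ∑ i, ‖w i‖ ^ 2 := by
        rw [trace_vecMulVec, dotProduct, Complex.re_sum]
        refine Finset.sum_congr rfl fun i _ => ?_
        rw [← Complex.normSq_eq_norm_sq, Complex.normSq_apply]
        simp
      rw [h3] at h1
      simp at h1
      linarith
    rw [← htr, Finset.mul_sum]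
    refine Finset.sum_le_sum fun i _ => ?_
    have := hg.dist_le_mul (hB.eigenvalues₀ i) (hA.eigenvalues₀ i)
    rwa [Real.dist_eq, Real.dist_eq, abs_of_nonneg (sub_nonneg.2 (hle i))] at this

/-- A rank-one perturbation moves a linear spectral statistic by at most the total variation
(interlacing) and by at most the Lipschitz constant times the trace norm. -/
lemma sum_eigenvalues_rankOne {N : ℕ} {A B : Matrix (Fin N) (Fin N) ℂ} (hA : A.IsHermitian)
    (hB : B.IsHermitian) (x : ℝ) (u : Fin N → ℂ)
    (hAB : B = A + (x : ℂ) • vecMulVec u (star u))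
    {g : ℝ → ℝ} {K : NNReal} (hg : LipschitzWith K g) (hgBV : BoundedVariationOn g Set.univ) :
    |∑ i, g (hB.eigenvalues i) - ∑ i, g (hA.eigenvalues i)|
      ≤ min (eVariationOn g Set.univ).toReal (K * (|x| * ∑ i, ‖u i‖ ^ 2)) := by
  have key : ∀ y : ℝ, 0 ≤ y → (y : ℂ) • vecMulVec u (star u)
      = vecMulVec ((√y : ℂ) • u) (star ((√y : ℂ) • u)) := fun y hy => by
    have : (y : ℂ) = √y * √y := by rw [← Complex.ofReal_mul, Real.mul_self_sqrt hy]
    ext i j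
    simp only [this, Matrix.smul_apply, vecMulVec_apply, Pi.smul_apply, Pi.star_apply, smul_eq_mul,
      star_mul', RCLike.star_def, Complex.conj_ofReal]
    ring
  have key2 : ∀ y : ℝ, 0 ≤ y → ∑ i, ‖((√y : ℂ) • u) i‖ ^ 2 = y * ∑ i, ‖u i‖ ^ 2 :=
    fun y hy => by
      rw [Finset.mul_sum]
      refine Finset.sum_congr rfl fun i _ => ?_
      rw [Pi.smul_apply, norm_smul, mul_pow, Complex.norm_real, Real.norm_eq_abs, sq_abs,
        Real.sq_sqrt hy]
  rcases le_total 0 x with hx | hx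
  · have := sum_eigenvalues_rankOne_aux hA hB ((√x : ℂ) • u) (by rw [hAB, key x hx]) hg hgBV
    rwa [key2 x hx, ← abs_of_nonneg hx] at this
  · have hx' : 0 ≤ -x := by linarith
    have := sum_eigenvalues_rankOne_aux hB hA ((√(-x) : ℂ) • u)
      (by rw [hAB, ← key _ hx', add_assoc, ← add_smul]; simp) hg hgBV
    rw [key2 _ hx', ← abs_of_nonpos hx, abs_sub_comm] at this
    exact this

/-- The ordered eigenvalues are `1`-Lipschitz for the operator norm; only their continuity is used. -/
lemma abs_eigenvalues₀_sub_le {N : ℕ} {A B : Matrix (Fin N) (Fin N) ℂ} (hA : A.IsHermitian)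
    (hB : B.IsHermitian) (i : Fin (Fintype.card (Fin N))) :
    |hA.eigenvalues₀ i - hB.eigenvalues₀ i|
      ≤ ‖(toEuclideanLin (A - B)).toContinuousLinearMap‖ := by
  have key : ∀ {A B : Matrix (Fin N) (Fin N) ℂ} (hA : A.IsHermitian) (hB : B.IsHermitian),
      hB.eigenvalues₀ i ≤ hA.eigenvalues₀ i
        + ‖(toEuclideanLin (A - B)).toContinuousLinearMap‖ := fun {A B} hA hB => by
    refine eigenvalues₀_le_of_codim (r := 0) hA hB 0 _ (fun x _ => ?_) i i (by simp)
    have h1 : (inner ℂ (toEuclideanLin (A - B) x) x).re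
        = (inner ℂ (toEuclideanLin A x) x).re - (inner ℂ (toEuclideanLin B x) x).re := by
      rw [map_sub, LinearMap.sub_apply, inner_sub_left, Complex.sub_re]
    have h2 := (Complex.abs_re_le_norm _).trans
      (norm_inner_le_norm (𝕜 := ℂ) (toEuclideanLin (A - B) x) x)
    have h3 : ‖toEuclideanLin (A - B) x‖
        ≤ ‖(toEuclideanLin (A - B)).toContinuousLinearMap‖ * ‖x‖ :=
      (toEuclideanLin (A - B)).toContinuousLinearMap.le_opNorm x
    have h4 := mul_le_mul_of_nonneg_right h3 (norm_nonneg x)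
    have := neg_le_of_abs_le h2
    nlinarith
  have h1 := key hA hB
  have h2 := key hB hA
  have h3 : ‖(toEuclideanLin (B - A)).toContinuousLinearMap‖
      = ‖(toEuclideanLin (A - B)).toContinuousLinearMap‖ := by
    rw [← neg_sub A B, map_neg, map_neg, norm_neg]
  rw [h3] at h2
  rw [abs_le]
  constructor <;> linarith

/-! ### Matrices as a real inner product space -/

/-- The space of all complex `N × N` matrices with the Hilbert–Schmidt norm; it is used as a real
inner product space. -/
abbrev HS (N : ℕ) : Type := PiLp 2 (fun _ : Fin N × Fin N => ℂ)

/-- A matrix as an element of `HS N`. -/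
def toHS {N : ℕ} (A : Matrix (Fin N) (Fin N) ℂ) : HS N := WithLp.toLp 2 fun p => A p.1 p.2

/-- The Hermitian part of an element of `HS N`. -/
def hermPart {N : ℕ} : HS N →ₗ[ℝ] Matrix (Fin N) (Fin N) ℂ where
  toFun v := Matrix.of fun i j => (v (i, j) + star (v (j, i))) / 2
  map_add' v w := by ext i j; simp; ring
  map_smul' c v := by ext i j; simp; ring

lemma hermPart_apply {N : ℕ} (v : HS N) (i j : Fin N) :
    hermPart v i j = (v (i, j) + star (v (j, i))) / 2 := rfl

lemma isHermitian_hermPart {N : ℕ} (v : HS N) : (hermPart v).IsHermitian := by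
  ext i j
  rw [conjTranspose_apply, hermPart_apply, hermPart_apply]
  simp [add_comm]

lemma hermPart_toHS {N : ℕ} {A : Matrix (Fin N) (Fin N) ℂ} (hA : A.IsHermitian) :
    hermPart (toHS A) = A := by
  ext i j
  rw [hermPart_apply]
  simp only [toHS]
  rw [hA.apply i j]
  ring

/-- The real inner product with a Hermitian matrix is the trace pairing with the Hermitian part;
for laws of Hermitian matrices, the characteristic function on `HS N` is therefore determined by
Hermitian test matrices. -/
lemma inner_toHS {N : ℕ} {A : Matrix (Fin N) (Fin N) ℂ} (hA : A.IsHermitian) (v : HS N) :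
    ((inner ℝ (toHS A) v : ℝ) : ℂ) = (hermPart v * A).trace := by
  have h1 : ((inner ℝ (toHS A) v : ℝ) : ℂ)
      = ∑ i, ∑ j, (v (i, j) * A j i + star (v (i, j) * A j i)) / 2 := by
    rw [PiLp.inner_apply, Complex.ofReal_sum, Fintype.sum_prod_type]
    refine Finset.sum_congr rfl fun i _ => Finset.sum_congr rfl fun j _ => ?_
    rw [RCLike.star_def, Complex.add_conj, Complex.inner, ← hA.apply j i]
    simp [toHS]
  have h2 : (hermPart v * A).trace
      = ∑ i, ∑ j, v (i, j) * A j i / 2 + ∑ i, ∑ j, star (v (j, i)) * A j i / 2 := by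
    simp only [trace, diag_apply, Matrix.mul_apply, hermPart_apply]
    simp only [← Finset.sum_add_distrib]
    refine Finset.sum_congr rfl fun i _ => Finset.sum_congr rfl fun j _ => ?_
    ring
  rw [h1, h2]
  simp only [add_div, Finset.sum_add_distrib]
  congr 1
  rw [Finset.sum_comm]
  refine Finset.sum_congr rfl fun i _ => Finset.sum_congr rfl fun j _ => ?_
  rw [star_mul', hA.apply]

/-- The rank-one matrix `(x / N) u u*`. -/
def rankOne {N : ℕ} (x : ℝ) (u : Fin N → ℂ) : Matrix (Fin N) (Fin N) ℂ :=
  ((x / N : ℝ) : ℂ) • vecMulVec u (star u)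

lemma isHermitian_rankOne {N : ℕ} (x : ℝ) (u : Fin N → ℂ) : (rankOne x u).IsHermitian := by
  ext i j
  simp [rankOne, vecMulVec_apply, mul_comm]

lemma inner_toHS_rankOne {N : ℕ} (x : ℝ) (u : Fin N → ℂ) (v : HS N) :
    inner ℝ (toHS (rankOne x u)) v
      = x * ((star u ⬝ᵥ (hermPart v).mulVec u).re / N) := by
  have h := congrArg Complex.re (inner_toHS (isHermitian_rankOne x u) v)
  rw [Complex.ofReal_re] at h
  rw [h, rankOne, Matrix.mul_smul, trace_smul, mul_vecMulVec, trace_vecMulVec, smul_eq_mul,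
    Complex.re_ofReal_mul, dotProduct_comm]
  ring

/-- The normalized linear spectral statistic of the Hermitian part. -/
def linStat {N : ℕ} (g : ℝ → ℝ) (v : HS N) : ℝ :=
  (N : ℝ)⁻¹ * ∑ i, g ((isHermitian_hermPart v).eigenvalues i)

lemma linStat_toHS {N : ℕ} (g : ℝ → ℝ) {A : Matrix (Fin N) (Fin N) ℂ} (hA : A.IsHermitian) :
    linStat g (toHS A) = (N : ℝ)⁻¹ * ∑ i, g (hA.eigenvalues i) := by
  have : ∀ B (hB : B.IsHermitian), B = A →
      ∑ i, g (hB.eigenvalues i) = ∑ i, g (hA.eigenvalues i) := by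
    rintro B hB rfl; rfl
  rw [linStat, this _ _ (hermPart_toHS hA)]

lemma continuous_linStat {N : ℕ} {g : ℝ → ℝ} (hg : Continuous g) :
    Continuous (linStat g : HS N → ℝ) := by
  unfold linStat
  simp only [sum_eigenvalues_eq]
  refine continuous_const.mul (continuous_finsetSum _ fun i _ => hg.comp ?_)
  let Φ : HS N →ₗ[ℝ] (EuclideanSpace ℂ (Fin N) →L[ℂ] EuclideanSpace ℂ (Fin N)) :=
    { toFun := fun v => (toEuclideanLin (hermPart v)).toContinuousLinearMap
      map_add' := fun v w => by rw [map_add, map_add, map_add]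
      map_smul' := fun c v => by
        rw [show hermPart (c • v) = (c : ℂ) • hermPart v by
          rw [map_smul]; ext i j; simp, map_smul, map_smul]
        ext x i
        simp }
  have hΦ : Continuous Φ := Φ.continuous_of_finiteDimensional
  rw [continuous_iff_continuousAt]
  intro v
  rw [ContinuousAt, tendsto_iff_norm_sub_tendsto_zero]
  have h0 : Tendsto (fun w => ‖Φ w - Φ v‖) (𝓝 v) (𝓝 0) :=
    tendsto_iff_norm_sub_tendsto_zero.1 (hΦ.tendsto v)
  refine squeeze_zero (fun _ => norm_nonneg _) (fun w => ?_) h0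
  have := abs_eigenvalues₀_sub_le (isHermitian_hermPart w) (isHermitian_hermPart v) i
  rw [map_sub, map_sub] at this
  exact this

/-- The bounded-difference property of the linear statistic; the first bound does not depend on the
size of the jump `x`, so that jumps with heavy tails are harmless. -/
lemma abs_linStat_add_rankOne_sub_le {N : ℕ} (hN : 1 ≤ N) {g : ℝ → ℝ} {K : NNReal}
    (hg : LipschitzWith K g) (hgBV : BoundedVariationOn g Set.univ) (v : HS N) (x : ℝ)
    (u : Fin N → ℂ) :
    |linStat g (v + toHS (rankOne x u)) - linStat g v|
      ≤ (N : ℝ)⁻¹ * min (eVariationOn g Set.univ).toReal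
          (K * (|x| * ((∑ i, ‖u i‖ ^ 2) / N))) := by
  have hN' : (0 : ℝ) < N := by exact_mod_cast hN
  have h := sum_eigenvalues_rankOne (isHermitian_hermPart v)
    (isHermitian_hermPart (v + toHS (rankOne x u))) (x / N) u
    (by rw [map_add, hermPart_toHS (isHermitian_rankOne x u), rankOne]) hg hgBV
  rw [linStat, linStat, ← mul_sub, abs_mul, abs_of_pos (inv_pos.2 hN')]
  refine mul_le_mul_of_nonneg_left (h.trans (le_of_eq ?_)) (by positivity)
  rw [abs_div, Nat.abs_cast]
  congr 2
  ring

lemma exists_abs_linStat_le {g : ℝ → ℝ} (hgBV : BoundedVariationOn g Set.univ) :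
    ∃ C : ℝ, ∀ (N : ℕ) (v : HS N), |linStat g v| ≤ C := by
  refine ⟨|g 0| + (eVariationOn g Set.univ).toReal, fun N v => ?_⟩
  have hb : ∀ x, |g x| ≤ |g 0| + (eVariationOn g Set.univ).toReal := fun x => by
    have := hgBV.dist_le (Set.mem_univ x) (Set.mem_univ 0)
    rw [Real.dist_eq] at this
    have h2 := abs_sub_abs_le_abs_sub (g x) (g 0)
    linarith
  rcases Nat.eq_zero_or_pos N with rfl | hN
  · simp only [linStat, Finset.univ_eq_empty, Finset.sum_empty, mul_zero, abs_zero]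
    positivity
  have hN' : (0 : ℝ) < N := by exact_mod_cast hN
  rw [linStat, abs_mul, abs_of_pos (inv_pos.2 hN'), inv_mul_le_iff₀ hN']
  refine (Finset.abs_sum_le_sum_abs _ _).trans
    ((Finset.sum_le_sum fun i _ => hb _).trans (le_of_eq ?_))
  simp
  ring

/-! ### Convolution powers and exponential moments -/

/-- Convolution powers of a measure. -/
def convPow {E : Type*} [AddCommMonoid E] [MeasurableSpace E] (ρ : Measure E) : ℕ → Measure E
  | 0 => Measure.dirac 0
  | n + 1 => convPow ρ n ∗ ρ

instance isProbabilityMeasure_convPow {E : Type*} [AddCommMonoid E] [MeasurableSpace E]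
    [MeasurableAdd₂ E] (ρ : Measure E) [IsProbabilityMeasure ρ] (n : ℕ) :
    IsProbabilityMeasure (convPow ρ n) := by
  induction n with
  | zero => unfold convPow; infer_instance
  | succ n ih => unfold convPow; infer_instance

lemma charFun_convPow {E : Type*} [NormedAddCommGroup E] [InnerProductSpace ℝ E]
    [FiniteDimensional ℝ E] [MeasurableSpace E] [BorelSpace E] (ρ : Measure E)
    [IsProbabilityMeasure ρ] (n : ℕ) (t : E) :
    charFun (convPow ρ n) t = charFun ρ t ^ n := by
  induction n with
  | zero => simp [convPow]
  | succ n ih => rw [convPow, charFun_conv, ih, pow_succ]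

lemma integrable_of_abs_le {S : Type*} [MeasurableSpace S] {π : Measure S} [IsFiniteMeasure π]
    {f : S → ℝ} (hf : Measurable f) {C : ℝ} (hC : ∀ s, |f s| ≤ C) : Integrable f π :=
  Integrable.of_bound hf.aestronglyMeasurable C (ae_of_all _ hC)

lemma exp_le_one_add_add_sq {d : ℝ} (hd : |d| ≤ 1) : Real.exp d ≤ 1 + d + d ^ 2 := by
  have h1 := Real.norm_exp_sub_one_sub_id_le (x := d) (by simpa using hd)
  rw [Real.norm_eq_abs, Real.norm_eq_abs, sq_abs] at h1
  linarith [le_of_abs_le h1]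

/-- One step of the martingale method. -/
lemma integral_exp_le {S : Type*} [MeasurableSpace S] {π : Measure S}
    [IsProbabilityMeasure π] {d φ : S → ℝ} (hd : Measurable d) (hφ : Measurable φ)
    (hdφ : ∀ s, |d s| ≤ φ s) (hφ1 : ∀ s, φ s ≤ 1) :
    ∫ s, Real.exp (d s) ∂π ≤ Real.exp (∫ s, d s ∂π + ∫ s, φ s ^ 2 ∂π) := by
  have hd1 : ∀ s, |d s| ≤ 1 := fun s => (hdφ s).trans (hφ1 s)
  have hφ0 : ∀ s, 0 ≤ φ s := fun s => (abs_nonneg _).trans (hdφ s)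
  have hdi : Integrable d π := integrable_of_abs_le hd hd1
  have hφi : Integrable (fun s => φ s ^ 2) π :=
    integrable_of_abs_le (hφ.pow_const 2) (C := 1) fun s => by
      rw [abs_of_nonneg (sq_nonneg _)]
      exact pow_le_one₀ (hφ0 s) (hφ1 s)
  calc ∫ s, Real.exp (d s) ∂π ≤ ∫ s, (1 + d s + φ s ^ 2) ∂π := by
        refine integral_mono_of_nonneg (ae_of_all _ fun s => (Real.exp_pos _).le)
          (((integrable_const 1).add hdi).add hφi) (ae_of_all _ fun s => ?_)
        have h1 := exp_le_one_add_add_sq (hd1 s)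
        have h2 : d s ^ 2 ≤ φ s ^ 2 := sq_le_sq' (abs_le.1 (hdφ s)).1 (abs_le.1 (hdφ s)).2
        dsimp only
        linarith
    _ = 1 + ∫ s, d s ∂π + ∫ s, φ s ^ 2 ∂π := by
        rw [integral_add (f := fun s => 1 + d s) ((integrable_const 1).add hdi) hφi,
          integral_add (f := fun _ => (1 : ℝ)) (integrable_const 1) hdi]
        simp
    _ ≤ _ := by
        have := Real.add_one_le_exp (∫ s, d s ∂π + ∫ s, φ s ^ 2 ∂π)
        linarith

lemma integral_conv_map {E S : Type*} [AddCommGroup E] [MeasurableSpace E] [MeasurableAdd₂ E]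
    [MeasurableSpace S] {π : Measure S} [IsProbabilityMeasure π] {r : S → E} (hr : Measurable r)
    (μ : Measure E) [IsProbabilityMeasure μ] {f : E → ℝ} (hf : Measurable f) {C : ℝ}
    (hC : ∀ x, |f x| ≤ C) :
    ∫ z, f z ∂(μ ∗ π.map r) = ∫ y, ∫ s, f (y + r s) ∂π ∂μ := by
  have := Measure.isProbabilityMeasure_map (μ := π) hr.aemeasurable
  rw [integral_conv (integrable_of_abs_le hf hC)]
  refine integral_congr_ae (ae_of_all _ fun y => ?_)
  exact integral_map hr.aemeasurable
    (hf.comp (measurable_const_add y)).aestronglyMeasurable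

/-- Exponential concentration for sums of independent increments `r s`, each of which changes
`F` by at most `φ s`: the averages `y ↦ ∫ F (y + r s) dπ(s)` inherit this property from `F`, so
that one step of the martingale method can be iterated. -/
lemma integral_exp_convPow_le {E S : Type*} [AddCommGroup E] [MeasurableSpace E]
    [MeasurableAdd₂ E] [MeasurableSpace S] {π : Measure S} [IsProbabilityMeasure π] {r : S → E}
    (hr : Measurable r) {φ : S → ℝ} (hφ : Measurable φ) (hφ1 : ∀ s, φ s ≤ 1) {C : ℝ} (n : ℕ) :
    ∀ {F : E → ℝ}, Measurable F → (∀ x, |F x| ≤ C) →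
    (∀ x s, |F (x + r s) - F x| ≤ φ s) →
    ∫ z, Real.exp (F z) ∂(convPow (π.map r) n)
      ≤ Real.exp (∫ z, F z ∂(convPow (π.map r) n) + n * ∫ s, φ s ^ 2 ∂π) := by
  have := Measure.isProbabilityMeasure_map (μ := π) hr.aemeasurable
  have hexpC : ∀ {F : E → ℝ}, (∀ x, |F x| ≤ C) → ∀ x, |Real.exp (F x)| ≤ Real.exp C :=
    fun hC x => by
      rw [abs_of_pos (Real.exp_pos _)]
      exact Real.exp_le_exp.2 ((le_abs_self _).trans (hC x))
  induction n with
  | zero =>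
    intro F hF hC hinc
    simp only [convPow]
    rw [integral_dirac' _ _ hF.stronglyMeasurable,
      integral_dirac' (fun z => Real.exp (F z)) _
        (Real.measurable_exp.comp hF).stronglyMeasurable]
    simp
  | succ n ih =>
    intro F hF hC hinc
    set μ := convPow (π.map r) n
    have hprod : Measurable fun p : E × S => F (p.1 + r p.2) :=
      hF.comp (measurable_fst.add (hr.comp measurable_snd))
    have hFs : ∀ y, Measurable fun s => F (y + r s) := fun y => hprod.comp measurable_prodMk_left
    have hFi : ∀ y, Integrable (fun s => F (y + r s)) π := fun y =>
      integrable_of_abs_le (hFs y) (fun s => hC _)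
    set G : E → ℝ := fun y => ∫ s, F (y + r s) ∂π with hG
    have hGm : Measurable G := (hprod.stronglyMeasurable.integral_prod_right).measurable
    have hGC : ∀ y, |G y| ≤ C := fun y => by
      have := norm_integral_le_of_norm_le_const (μ := π)
        (f := fun s => F (y + r s)) (C := C) (ae_of_all _ fun s => hC (y + r s))
      simpa using this
    have hGinc : ∀ x s, |G (x + r s) - G x| ≤ φ s := fun x s => by
      rw [hG]
      dsimp only
      rw [← integral_sub (hFi _) (hFi _)]
      have := norm_integral_le_of_norm_le_const (μ := π)
        (f := fun s' => F (x + r s + r s') - F (x + r s')) (C := φ s)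
        (ae_of_all _ fun s' => by
          rw [show x + r s + r s' = x + r s' + r s by abel]
          exact hinc _ _)
      simpa using this
    have hstep : ∀ y, ∫ s, Real.exp (F (y + r s)) ∂π
        ≤ Real.exp (G y) * Real.exp (∫ s, φ s ^ 2 ∂π) := fun y => by
      have h1 := integral_exp_le (π := π) (d := fun s => F (y + r s) - F y) (φ := φ)
        ((hFs y).sub_const _) hφ (fun s => hinc y s) hφ1
      rw [integral_sub (hFi y) (integrable_const _)] at h1
      simp only [Real.exp_sub, integral_div] at h1
      rw [div_le_iff₀ (Real.exp_pos _)] at h1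
      refine h1.trans (le_of_eq ?_)
      rw [← Real.exp_add, ← Real.exp_add]
      simp only [integral_const, probReal_univ, one_smul, hG]
      congr 1
      ring
    have hexpm : Measurable fun z => Real.exp (F z) := Real.measurable_exp.comp hF
    rw [convPow, integral_conv_map hr μ hexpm (hexpC hC), integral_conv_map hr μ hF hC]
    calc ∫ y, ∫ s, Real.exp (F (y + r s)) ∂π ∂μ
        ≤ ∫ y, Real.exp (G y) * Real.exp (∫ s, φ s ^ 2 ∂π) ∂μ := by
          refine integral_mono_of_nonneg
            (ae_of_all _ fun y => integral_nonneg fun s => (Real.exp_pos _).le) ?_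
            (ae_of_all _ hstep)
          exact (integrable_of_abs_le (Real.measurable_exp.comp hGm) (hexpC hGC)).mul_const _
      _ = (∫ y, Real.exp (G y) ∂μ) * Real.exp (∫ s, φ s ^ 2 ∂π) := integral_mul_const _ _
      _ ≤ Real.exp (∫ z, G z ∂μ + n * ∫ s, φ s ^ 2 ∂π) * Real.exp (∫ s, φ s ^ 2 ∂π) :=
          mul_le_mul_of_nonneg_right (ih hGm hGC hGinc) (Real.exp_pos _).le
      _ = _ := by
          rw [← Real.exp_add]
          congr 1
          push_cast
          ring

/-! ### The Lévy kernel -/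

lemma norm_exp_I_sub_one_sub_le (x : ℝ) :
    ‖Complex.exp (Complex.I * x) - 1 - Complex.I * x‖ ≤ 3 * x ^ 2 := by
  have hn : ‖Complex.I * (x : ℂ)‖ = |x| := by simp
  rcases le_or_gt |x| 1 with h | h
  · have := Complex.norm_exp_sub_one_sub_id_le (x := Complex.I * x) (by rw [hn]; exact h)
    rw [hn, sq_abs] at this
    nlinarith [sq_nonneg x]
  · have h1 : ‖Complex.exp (Complex.I * x) - 1‖ ≤ |x| :=
      Real.norm_exp_I_mul_ofReal_sub_one_le
    have h2 := norm_sub_le (Complex.exp (Complex.I * x) - 1) (Complex.I * x)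
    rw [hn] at h2
    have h3 : |x| ≤ x ^ 2 := by rw [← sq_abs]; nlinarith
    nlinarith [sq_nonneg x]

/-- The kernel split into a compound Poisson part and a drift `-i ξ / t`. -/
lemma levyKernel_of_ne_zero {t : ℝ} (ht : t ≠ 0) (ξ : ℝ) :
    levyKernel t ξ = (Complex.exp (Complex.I * (t * ξ : ℝ)) - 1) * ((1 + t ^ 2) / t ^ 2 : ℝ)
      - Complex.I * (ξ / t : ℝ) := by
  have h1 : (t : ℂ) ≠ 0 := by exact_mod_cast ht
  have h2 : (1 + (t : ℂ) ^ 2) ≠ 0 := by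
    have : (1 + t ^ 2 : ℝ) ≠ 0 := by positivity
    exact_mod_cast this
  rw [levyKernel, if_neg ht]
  push_cast
  rw [mul_assoc Complex.I (t : ℂ) (ξ : ℂ)]
  field_simp

/-- Form of the kernel adapted to small `t`. -/
lemma levyKernel_eq_small {t : ℝ} (ht : t ≠ 0) (ξ : ℝ) :
    levyKernel t ξ = (Complex.exp (Complex.I * (t * ξ : ℝ)) - 1 - Complex.I * (t * ξ : ℝ))
      * ((1 + t ^ 2) / t ^ 2 : ℝ) + Complex.I * (t * ξ : ℝ) := by
  have h1 : (t : ℂ) ≠ 0 := by exact_mod_cast ht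
  rw [levyKernel_of_ne_zero ht]
  push_cast
  field_simp
  ring

/-- The bound uniform in `t` that makes dominated convergence available; the square growth in `ξ` is
what the fourth moments of the random vectors control. -/
lemma norm_levyKernel_le (t ξ : ℝ) : ‖levyKernel t ξ‖ ≤ 10 * (1 + ξ ^ 2) := by
  rcases eq_or_ne t 0 with rfl | ht
  · rw [levyKernel, if_pos rfl]
    simp
    nlinarith [sq_nonneg ξ]
  have ht2 : 0 < t ^ 2 := by positivity
  have hξ : |ξ| ≤ 1 + ξ ^ 2 := by rw [← sq_abs]; nlinarith [sq_nonneg (|ξ| - 1)]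
  rcases le_or_gt |t| 1 with h | h
  · have hc : |(1 + t ^ 2) / t ^ 2| * t ^ 2 ≤ 2 := by
      rw [abs_of_pos (by positivity), div_mul_cancel₀ _ ht2.ne', ← sq_abs]
      nlinarith [abs_nonneg t]
    rw [levyKernel_eq_small ht]
    refine (norm_add_le _ _).trans ?_
    rw [norm_mul, norm_mul, Complex.norm_real, Complex.norm_real, Complex.norm_I, one_mul,
      Real.norm_eq_abs, Real.norm_eq_abs]
    have h1 := norm_exp_I_sub_one_sub_le (t * ξ)
    have h2 : ‖Complex.exp (Complex.I * (t * ξ : ℝ)) - 1 - Complex.I * (t * ξ : ℝ)‖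
        * |(1 + t ^ 2) / t ^ 2| ≤ 3 * (t * ξ) ^ 2 * |(1 + t ^ 2) / t ^ 2| :=
      mul_le_mul_of_nonneg_right h1 (abs_nonneg _)
    have h3 : 3 * (t * ξ) ^ 2 * |(1 + t ^ 2) / t ^ 2| ≤ 6 * ξ ^ 2 := by
      calc _ = 3 * ξ ^ 2 * (|(1 + t ^ 2) / t ^ 2| * t ^ 2) := by ring
        _ ≤ 3 * ξ ^ 2 * 2 := mul_le_mul_of_nonneg_left hc (by positivity)
        _ = _ := by ring
    have h4 : |t * ξ| ≤ |ξ| := by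
      rw [abs_mul]; exact mul_le_of_le_one_left (abs_nonneg _) h
    nlinarith
  · have h1 : 1 ≤ t ^ 2 := by rw [← sq_abs]; nlinarith
    have hc : |(1 + t ^ 2) / t ^ 2| ≤ 2 := by
      rw [abs_of_pos (by positivity), div_le_iff₀ ht2]; linarith
    rw [levyKernel_of_ne_zero ht]
    refine (norm_sub_le _ _).trans ?_
    rw [norm_mul, norm_mul, Complex.norm_real, Complex.norm_real, Complex.norm_I, one_mul,
      Real.norm_eq_abs, Real.norm_eq_abs]
    have h2 : ‖Complex.exp (Complex.I * (t * ξ : ℝ)) - 1‖ ≤ 2 := by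
      refine (norm_sub_le _ _).trans ?_
      rw [mul_comm, Complex.norm_exp_ofReal_mul_I]
      norm_num
    have h3 : |ξ / t| ≤ |ξ| := by
      rw [abs_div]; exact div_le_self (abs_nonneg _) h.le
    have h4 : ‖Complex.exp (Complex.I * (t * ξ : ℝ)) - 1‖ * |(1 + t ^ 2) / t ^ 2| ≤ 2 * 2 :=
      mul_le_mul h2 hc (abs_nonneg _) (by norm_num)
    nlinarith [sq_nonneg ξ]

lemma measurable_levyKernel (ξ : ℝ) : Measurable fun t => levyKernel t ξ := by
  unfold levyKernel
  refine Measurable.ite (measurableSet_singleton 0) measurable_const ?_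
  fun_prop

lemma tendsto_levyKernel_zero (ξ : ℝ) {s : ℕ → ℝ} (hs : Tendsto s atTop (𝓝 0))
    (hs0 : ∀ k, s k ≠ 0) :
    Tendsto (fun k => levyKernel (s k) ξ) atTop (𝓝 (levyKernel 0 ξ)) := by
  have hq : Tendsto (fun k => ((s k * ξ : ℝ) : ℂ)) atTop (𝓝 0) := by
    have := (hs.mul_const ξ)
    rw [zero_mul] at this
    exact_mod_cast (Complex.continuous_ofReal.tendsto 0).comp this
  have hrem : Tendsto (fun k => (Complex.exp (Complex.I * (s k * ξ : ℝ)) - 1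
      - Complex.I * (s k * ξ : ℝ) - (Complex.I * (s k * ξ : ℝ)) ^ 2 / 2) / (s k : ℂ) ^ 2)
      atTop (𝓝 0) := by
    rw [tendsto_zero_iff_norm_tendsto_zero]
    have hb : Tendsto (fun k => |s k| * |ξ| ^ 3) atTop (𝓝 0) := by
      simpa using (hs.abs.mul_const (|ξ| ^ 3))
    have hsm : ∀ᶠ k in atTop, ‖((s k * ξ : ℝ) : ℂ)‖ ≤ 1 := by
      have := hq.norm
      rw [norm_zero] at this
      exact (this.eventually_lt_const one_pos).mono fun k hk => hk.le
    refine squeeze_zero' (Eventually.of_forall fun _ => norm_nonneg _) (hsm.mono fun k hk => ?_) hb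
    have hn : ‖Complex.I * ((s k * ξ : ℝ) : ℂ)‖ = |s k| * |ξ| := by
      rw [norm_mul, Complex.norm_I, one_mul, Complex.norm_real, Real.norm_eq_abs, abs_mul]
    have hx : ‖Complex.I * ((s k * ξ : ℝ) : ℂ)‖ ≤ 1 := by simpa using hk
    have := Complex.exp_bound hx (n := 3) (by norm_num)
    simp only [Finset.sum_range_succ, Finset.sum_range_zero] at this
    rw [norm_div, norm_pow, Complex.norm_real, Real.norm_eq_abs,
      div_le_iff₀ (by have := abs_pos.2 (hs0 k); positivity)]
    rw [hn] at this
    calc _ = ‖Complex.exp (Complex.I * (s k * ξ : ℝ)) - (0 + (Complex.I * (s k * ξ : ℝ)) ^ 0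
          / (Nat.factorial 0 : ℂ) + (Complex.I * (s k * ξ : ℝ)) ^ 1 / (Nat.factorial 1 : ℂ)
          + (Complex.I * (s k * ξ : ℝ)) ^ 2 / (Nat.factorial 2 : ℂ))‖ := by
          congr 1; simp [Nat.factorial]; ring
      _ ≤ _ := this
      _ ≤ (|s k| * |ξ|) ^ 3 * 1 := by
          refine mul_le_mul_of_nonneg_left ?_ (by positivity)
          norm_num [Nat.factorial]
      _ = _ := by ring
  have hs' : Tendsto (fun k => (s k : ℂ)) atTop (𝓝 0) := by
    exact_mod_cast (Complex.continuous_ofReal.tendsto 0).comp hs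
  have hmain : Tendsto (fun k => ((Complex.exp (Complex.I * (s k * ξ : ℝ)) - 1
      - Complex.I * (s k * ξ : ℝ) - (Complex.I * (s k * ξ : ℝ)) ^ 2 / 2) / (s k : ℂ) ^ 2
      + -(ξ : ℂ) ^ 2 / 2) * (1 + (s k : ℂ) ^ 2) + Complex.I * (s k * ξ : ℝ)) atTop
      (𝓝 ((0 + -(ξ : ℂ) ^ 2 / 2) * (1 + 0 ^ 2) + Complex.I * 0)) :=
    ((hrem.add_const _).mul ((hs'.pow 2).const_add 1)).add (hq.const_mul _)
  have h0 : levyKernel 0 ξ = (0 + -(ξ : ℂ) ^ 2 / 2) * (1 + 0 ^ 2) + Complex.I * 0 := by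
    rw [levyKernel, if_pos rfl]; ring
  rw [h0]
  refine hmain.congr fun k => ?_
  have h1 : (s k : ℂ) ≠ 0 := by exact_mod_cast hs0 k
  rw [levyKernel_eq_small (hs0 k), mul_pow, Complex.I_sq]
  push_cast
  field_simp
  ring

/-- Truncation of the jump sizes: sizes below `1 / (k + 1)` in modulus become `1 / (k + 1)`. -/
def trunc (k : ℕ) (t : ℝ) : ℝ := if 1 / ((k : ℝ) + 1) ≤ |t| then t else 1 / ((k : ℝ) + 1)

lemma le_abs_trunc (k : ℕ) (t : ℝ) : 1 / ((k : ℝ) + 1) ≤ |trunc k t| := by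
  unfold trunc
  split_ifs with h
  · exact h
  · exact le_abs_self _

lemma trunc_ne_zero (k : ℕ) (t : ℝ) : trunc k t ≠ 0 :=
  abs_pos.1 (lt_of_lt_of_le (by positivity) (le_abs_trunc k t))

lemma measurable_trunc (k : ℕ) : Measurable (trunc k) := by
  unfold trunc
  exact Measurable.ite (measurableSet_le measurable_const (by fun_prop)) measurable_id
    measurable_const

lemma tendsto_levyKernel_trunc (t ξ : ℝ) :
    Tendsto (fun k => levyKernel (trunc k t) ξ) atTop (𝓝 (levyKernel t ξ)) := by
  have h0 := tendsto_one_div_add_atTop_nhds_zero_nat (𝕜 := ℝ)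
  rcases eq_or_ne t 0 with rfl | ht
  · have : ∀ k, trunc k 0 = 1 / ((k : ℝ) + 1) := fun k => by
      unfold trunc
      rw [if_neg]
      rw [abs_zero, not_le]
      positivity
    refine tendsto_levyKernel_zero ξ ?_ (fun k => trunc_ne_zero k 0)
    simpa only [this] using h0
  · refine tendsto_const_nhds.congr' ?_
    filter_upwards [h0.eventually_lt_const (abs_pos.2 ht)] with k hk
    rw [trunc, if_pos hk.le]

lemma abs_one_div_trunc_le (k : ℕ) (t : ℝ) : |1 / trunc k t| ≤ (k : ℝ) + 1 := by
  have := one_div_le_one_div_of_le (by positivity) (le_abs_trunc k t)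
  rwa [one_div_one_div, ← abs_one, ← abs_div, abs_one] at this

/-! ### Compound Poisson approximation of a Lévy exponent -/

/-- The drift that is left over once the compensator of the jumps has been taken out. -/
def drift (γ : ℝ) (σ : Measure ℝ) (k : ℕ) : ℝ := γ - ∫ t, 1 / trunc k t ∂σ

/-- The jump measure of a compound Poisson approximation of the Lévy pair `(γ, σ)`: the jumps of
`σ` with sizes truncated away from `0`, and many tiny jumps which stand for the drift. -/
def jumpMeasure (γ : ℝ) (σ : Measure ℝ) (k : ℕ) : Measure ℝ :=
  (σ.withDensity fun t => ENNReal.ofReal ((1 + trunc k t ^ 2) / trunc k t ^ 2)).map (trunc k) +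
    ENNReal.ofReal (((k : ℝ) + 1) ^ 4) • Measure.dirac (drift γ σ k / ((k : ℝ) + 1) ^ 4)

lemma density_le (k : ℕ) (t : ℝ) :
    (1 + trunc k t ^ 2) / trunc k t ^ 2 ≤ ((k : ℝ) + 1) ^ 2 + 1 := by
  have h0 : trunc k t ^ 2 ≠ 0 := pow_ne_zero 2 (trunc_ne_zero k t)
  have h1 : (1 / trunc k t) ^ 2 ≤ ((k : ℝ) + 1) ^ 2 :=
    sq_le_sq' (abs_le.1 (abs_one_div_trunc_le k t)).1 (abs_le.1 (abs_one_div_trunc_le k t)).2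
  rw [add_div, div_self h0]
  rw [div_pow, one_pow] at h1
  linarith

lemma density_nonneg (k : ℕ) (t : ℝ) : 0 ≤ (1 + trunc k t ^ 2) / trunc k t ^ 2 := by positivity

instance isFiniteMeasure_jumpMeasure (γ : ℝ) (σ : Measure ℝ) [IsFiniteMeasure σ] (k : ℕ) :
    IsFiniteMeasure (jumpMeasure γ σ k) := by
  have h1 : IsFiniteMeasure
      (σ.withDensity fun t => ENNReal.ofReal ((1 + trunc k t ^ 2) / trunc k t ^ 2)) := by
    refine isFiniteMeasure_withDensity (ne_of_lt ?_)
    calc _ ≤ ∫⁻ _, ENNReal.ofReal (((k : ℝ) + 1) ^ 2 + 1) ∂σ :=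
          lintegral_mono fun t => ENNReal.ofReal_le_ofReal (density_le k t)
      _ < ⊤ := by
          rw [lintegral_const]
          exact ENNReal.mul_lt_top ENNReal.ofReal_lt_top (measure_lt_top _ _)
  have h2 : IsFiniteMeasure (ENNReal.ofReal (((k : ℝ) + 1) ^ 4) •
      Measure.dirac (drift γ σ k / ((k : ℝ) + 1) ^ 4)) :=
    Measure.smul_finite _ ENNReal.ofReal_ne_top
  unfold jumpMeasure
  infer_instance

lemma integral_jumpMeasure {E : Type*} [NormedAddCommGroup E] [NormedSpace ℝ E] [CompleteSpace E]
    (γ : ℝ) (σ : Measure ℝ) [IsFiniteMeasure σ] (k : ℕ) {f : ℝ → E} (hf : Continuous f)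
    {C : ℝ} (hC : ∀ x, ‖f x‖ ≤ C) :
    ∫ x, f x ∂(jumpMeasure γ σ k) =
      ∫ t, ((1 + trunc k t ^ 2) / trunc k t ^ 2) • f (trunc k t) ∂σ +
        ((k : ℝ) + 1) ^ 4 • f (drift γ σ k / ((k : ℝ) + 1) ^ 4) := by
  have hJ := isFiniteMeasure_jumpMeasure γ σ k
  unfold jumpMeasure at hJ ⊢
  have hi := Integrable.of_bound (μ := (σ.withDensity fun t =>
    ENNReal.ofReal ((1 + trunc k t ^ 2) / trunc k t ^ 2)).map (trunc k) +
    ENNReal.ofReal (((k : ℝ) + 1) ^ 4) • Measure.dirac (drift γ σ k / ((k : ℝ) + 1) ^ 4))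
    hf.aestronglyMeasurable C (ae_of_all _ hC)
  have hm := measurable_trunc k
  rw [integral_add_measure hi.left_of_add_measure hi.right_of_add_measure,
    integral_map hm.aemeasurable hf.aestronglyMeasurable,
    integral_withDensity_eq_integral_toReal_smul (by fun_prop)
      (ae_of_all _ fun _ => ENNReal.ofReal_lt_top), integral_smul_measure, integral_dirac,
    ENNReal.toReal_ofReal (by positivity)]
  congr 1
  refine integral_congr_ae (ae_of_all _ fun t => ?_)
  dsimp only
  rw [ENNReal.toReal_ofReal (density_nonneg k t)]

lemma abs_drift_le (γ : ℝ) (σ : Measure ℝ) [IsFiniteMeasure σ] (k : ℕ) :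
    |drift γ σ k| ≤ (|γ| + σ.real Set.univ) * ((k : ℝ) + 1) := by
  have h1 : |∫ t, 1 / trunc k t ∂σ| ≤ ((k : ℝ) + 1) * σ.real Set.univ :=
    norm_integral_le_of_norm_le_const (f := fun t => 1 / trunc k t)
      (ae_of_all _ fun t => abs_one_div_trunc_le k t)
  have h2 := abs_sub γ (∫ t, 1 / trunc k t ∂σ)
  have h3 : 0 ≤ |γ| * k := by positivity
  unfold drift
  nlinarith

/-- The drift, of order `k + 1`, is cut into `(k + 1) ^ 4` jumps; this is the resulting second
moment, which tends to `0`. -/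
lemma drift_sq_div_le (γ : ℝ) (σ : Measure ℝ) [IsFiniteMeasure σ] (k : ℕ) :
    drift γ σ k ^ 2 / ((k : ℝ) + 1) ^ 4 ≤
      (|γ| + σ.real Set.univ) ^ 2 * (1 / ((k : ℝ) + 1)) ^ 2 := by
  have h1 : drift γ σ k ^ 2 ≤ ((|γ| + σ.real Set.univ) * ((k : ℝ) + 1)) ^ 2 :=
    sq_le_sq' (abs_le.1 (abs_drift_le γ σ k)).1 (abs_le.1 (abs_drift_le γ σ k)).2
  rw [div_le_iff₀ (by positivity)]
  refine h1.trans (le_of_eq ?_)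
  field_simp

lemma one_div_sq_le_one (k : ℕ) : (1 / ((k : ℝ) + 1)) ^ 2 ≤ 1 := by
  refine pow_le_one₀ (by positivity) ?_
  rw [div_le_one (by positivity)]
  have : (0 : ℝ) ≤ k := k.cast_nonneg
  linarith

/-- The truncated second moments of the approximating jump measures are bounded. -/
lemma integral_min_jumpMeasure_le (γ : ℝ) (σ : Measure ℝ) [IsFiniteMeasure σ] (k : ℕ) :
    ∫ x, min 1 (x ^ 2) ∂(jumpMeasure γ σ k) ≤
      2 * σ.real Set.univ + (|γ| + σ.real Set.univ) ^ 2 := by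
  rw [integral_jumpMeasure γ σ k (f := fun x : ℝ => min 1 (x ^ 2)) (by fun_prop) (C := 1)
    (fun x => by rw [Real.norm_of_nonneg (by positivity)]; exact min_le_left _ _)]
  refine add_le_add ?_ ?_
  · refine (le_of_abs_le (norm_integral_le_of_norm_le_const (C := 2)
      (f := fun t => ((1 + trunc k t ^ 2) / trunc k t ^ 2) • min 1 (trunc k t ^ 2))
      (ae_of_all _ fun t => ?_)))
    have h0 : 0 < trunc k t ^ 2 := by have := trunc_ne_zero k t; positivity
    rw [smul_eq_mul, Real.norm_of_nonneg (by positivity), div_mul_eq_mul_div, div_le_iff₀ h0]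
    have h1 := min_le_left 1 (trunc k t ^ 2)
    have h2 := min_le_right 1 (trunc k t ^ 2)
    nlinarith
  · rw [smul_eq_mul]
    have h1 := drift_sq_div_le γ σ k
    have h2 := one_div_sq_le_one k
    have h3 : (|γ| + σ.real Set.univ) ^ 2 * (1 / ((k : ℝ) + 1)) ^ 2 ≤
        (|γ| + σ.real Set.univ) ^ 2 := mul_le_of_le_one_right (sq_nonneg _) h2
    calc _ ≤ ((k : ℝ) + 1) ^ 4 * (drift γ σ k / ((k : ℝ) + 1) ^ 4) ^ 2 :=
          mul_le_mul_of_nonneg_left (min_le_right _ _) (by positivity)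
      _ = drift γ σ k ^ 2 / ((k : ℝ) + 1) ^ 4 := by field_simp
      _ ≤ _ := h1.trans h3

/-- The exponent `∫ (exp (i x ξ) - 1) dJ(x)` of the compound Poisson law with jump measure `J`. -/
def poissonExponent (J : Measure ℝ) (ξ : ℝ) : ℂ := charFun J ξ - (J.real Set.univ : ℂ)

/-- The jumps from `σ` reproduce the truncated Lévy exponent exactly up to a drift term; the error
comes only from replacing the remaining drift by tiny jumps. -/
lemma norm_poissonExponent_sub_le (γ : ℝ) (σ : Measure ℝ) [IsFiniteMeasure σ] (k : ℕ) (ξ : ℝ) :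
    ‖poissonExponent (jumpMeasure γ σ k) ξ -
        (Complex.I * γ * ξ + ∫ t, levyKernel (trunc k t) ξ ∂σ)‖ ≤
      3 * ξ ^ 2 * ((|γ| + σ.real Set.univ) ^ 2 * (1 / ((k : ℝ) + 1)) ^ 2) := by
  have hexp : Continuous fun x : ℝ => Complex.exp (Complex.I * (x * ξ : ℝ)) := by fun_prop
  have hn : ∀ x : ℝ, ‖Complex.exp (Complex.I * (x * ξ : ℝ))‖ = 1 := fun x => by
    rw [mul_comm, Complex.norm_exp_ofReal_mul_I]
  have h1 : poissonExponent (jumpMeasure γ σ k) ξ =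
      ∫ x, (Complex.exp (Complex.I * (x * ξ : ℝ)) - 1) ∂(jumpMeasure γ σ k) := by
    rw [integral_sub (Integrable.of_bound hexp.aestronglyMeasurable 1
      (ae_of_all _ fun x => (hn x).le)) (integrable_const _), poissonExponent, charFun_apply_real]
    congr 1
    · refine integral_congr_ae (ae_of_all _ fun x => ?_)
      dsimp only
      congr 1
      push_cast
      ring
    · simp
  have hIn : Integrable (fun t => levyKernel (trunc k t) ξ) σ :=
    Integrable.of_bound ((measurable_levyKernel ξ).comp (measurable_trunc k)).aestronglyMeasurable
      (10 * (1 + ξ ^ 2)) (ae_of_all _ fun t => norm_levyKernel_le _ _)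
  have hIn2 : Integrable (fun t => ((1 / trunc k t : ℝ) : ℂ)) σ :=
    Integrable.of_bound (Complex.measurable_ofReal.comp
      ((measurable_const.div (measurable_trunc k)))).aestronglyMeasurable
      ((k : ℝ) + 1) (ae_of_all _ fun t => by
        rw [Complex.norm_real]; exact abs_one_div_trunc_le k t)
  have h2 : ∫ t, ((1 + trunc k t ^ 2) / trunc k t ^ 2) •
      (Complex.exp (Complex.I * (trunc k t * ξ : ℝ)) - 1) ∂σ =
      ∫ t, levyKernel (trunc k t) ξ ∂σ + Complex.I * ξ * (γ - drift γ σ k : ℝ) := by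
    have h3 : (γ - drift γ σ k : ℝ) = ∫ t, 1 / trunc k t ∂σ := by unfold drift; ring
    rw [h3, ← integral_complex_ofReal, ← integral_const_mul,
      ← integral_add hIn (hIn2.const_mul _)]
    refine integral_congr_ae (ae_of_all _ fun t => ?_)
    dsimp only
    rw [levyKernel_of_ne_zero (trunc_ne_zero k t), Complex.real_smul]
    push_cast
    ring
  have hK : (0 : ℝ) < ((k : ℝ) + 1) ^ 4 := by positivity
  rw [h1, integral_jumpMeasure γ σ k
    (f := fun x : ℝ => Complex.exp (Complex.I * (x * ξ : ℝ)) - 1)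
    (hexp.sub continuous_const) (C := 2) (fun x =>
    (norm_sub_le _ _).trans (by rw [hn]; norm_num)), h2]
  set b := drift γ σ k
  set a := ((k : ℝ) + 1) ^ 4
  have h4 : ∀ I₀ : ℂ, I₀ + Complex.I * ξ * (γ - b : ℝ) +
      a • (Complex.exp (Complex.I * (b / a * ξ : ℝ)) - 1) - (Complex.I * γ * ξ + I₀) =
      (a : ℂ) * (Complex.exp (Complex.I * (b / a * ξ : ℝ)) - 1
        - Complex.I * (b / a * ξ : ℝ)) := fun I₀ => by
    have : (a : ℂ) ≠ 0 := by exact_mod_cast hK.ne'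
    rw [Complex.real_smul]
    push_cast
    field_simp
    ring
  rw [h4, norm_mul, Complex.norm_real, Real.norm_of_nonneg hK.le]
  have h5 : b ^ 2 / a ≤ (|γ| + σ.real Set.univ) ^ 2 * (1 / ((k : ℝ) + 1)) ^ 2 :=
    drift_sq_div_le γ σ k
  calc _ ≤ a * (3 * (b / a * ξ) ^ 2) :=
        mul_le_mul_of_nonneg_left (norm_exp_I_sub_one_sub_le _) hK.le
    _ = 3 * ξ ^ 2 * (b ^ 2 / a) := by field_simp
    _ ≤ _ := mul_le_mul_of_nonneg_left h5 (by positivity)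

lemma norm_poissonExponent_le (γ : ℝ) (σ : Measure ℝ) [IsFiniteMeasure σ] (k : ℕ) (ξ : ℝ) :
    ‖poissonExponent (jumpMeasure γ σ k) ξ‖ ≤
      (3 * (|γ| + σ.real Set.univ) ^ 2 + |γ| + 10 * σ.real Set.univ) * (1 + ξ ^ 2) := by
  have h1 := norm_poissonExponent_sub_le γ σ k ξ
  have h2 := one_div_sq_le_one k
  have h3 : (|γ| + σ.real Set.univ) ^ 2 * (1 / ((k : ℝ) + 1)) ^ 2 ≤
      (|γ| + σ.real Set.univ) ^ 2 := mul_le_of_le_one_right (sq_nonneg _) h2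
  have h4 : ‖∫ t, levyKernel (trunc k t) ξ ∂σ‖ ≤ 10 * (1 + ξ ^ 2) * σ.real Set.univ :=
    norm_integral_le_of_norm_le_const (ae_of_all _ fun t => norm_levyKernel_le _ _)
  have h5 : ‖Complex.I * γ * ξ‖ ≤ |γ| * (1 + ξ ^ 2) := by
    rw [norm_mul, norm_mul, Complex.norm_I, one_mul, Complex.norm_real, Complex.norm_real]
    refine mul_le_mul_of_nonneg_left ?_ (abs_nonneg γ)
    rw [Real.norm_eq_abs, ← sq_abs]
    nlinarith [sq_nonneg (|ξ| - 1)]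
  have h6 := norm_add_le (Complex.I * γ * ξ) (∫ t, levyKernel (trunc k t) ξ ∂σ)
  have h7 := norm_le_norm_add_norm_sub' (poissonExponent (jumpMeasure γ σ k) ξ)
    (Complex.I * γ * ξ + ∫ t, levyKernel (trunc k t) ξ ∂σ)
  have h8 : 3 * ξ ^ 2 * ((|γ| + σ.real Set.univ) ^ 2 * (1 / ((k : ℝ) + 1)) ^ 2) ≤
      3 * ξ ^ 2 * (|γ| + σ.real Set.univ) ^ 2 := mul_le_mul_of_nonneg_left h3 (by positivity)
  nlinarith [sq_nonneg (|γ| + σ.real Set.univ)]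

lemma tendsto_poissonExponent (γ : ℝ) (σ : Measure ℝ) [IsFiniteMeasure σ] (ξ : ℝ) :
    Tendsto (fun k => poissonExponent (jumpMeasure γ σ k) ξ) atTop
      (𝓝 (levyExponent γ σ ξ)) := by
  have h1 : Tendsto (fun k : ℕ => ∫ t, levyKernel (trunc k t) ξ ∂σ) atTop
      (𝓝 (∫ t, levyKernel t ξ ∂σ)) :=
    tendsto_integral_of_dominated_convergence (fun _ => 10 * (1 + ξ ^ 2))
      (fun k => ((measurable_levyKernel ξ).comp (measurable_trunc k)).aestronglyMeasurable)
      (integrable_const _) (fun k => ae_of_all _ fun t => norm_levyKernel_le _ _)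
      (ae_of_all _ fun t => tendsto_levyKernel_trunc t ξ)
  have h2 : Tendsto (fun k => poissonExponent (jumpMeasure γ σ k) ξ -
        (Complex.I * γ * ξ + ∫ t, levyKernel (trunc k t) ξ ∂σ)) atTop (𝓝 0) := by
    refine squeeze_zero_norm (norm_poissonExponent_sub_le γ σ · ξ) ?_
    have := ((tendsto_one_div_add_atTop_nhds_zero_nat (𝕜 := ℝ)).pow 2).const_mul
      ((|γ| + σ.real Set.univ) ^ 2) |>.const_mul (3 * ξ ^ 2)
    simpa using this
  have h3 := h2.add (h1.const_add (Complex.I * γ * ξ))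
  simpa [levyExponent] using h3

/-- Compound Poisson laws are approximated by convolution powers of this law: with probability
`J(ℝ) / m` a jump is drawn from `J` normalized, otherwise nothing happens. It is a probability
measure once `J(ℝ) ≤ m`. -/
def jumpLaw (J : Measure ℝ) (m : ℕ) : Measure ℝ :=
  ENNReal.ofReal (1 / m) • J + ENNReal.ofReal (1 - J.real Set.univ / m) • Measure.dirac 0

lemma isProbabilityMeasure_jumpLaw (J : Measure ℝ) [IsFiniteMeasure J] {m : ℕ} (hm : 0 < m)
    (hJ : J.real Set.univ ≤ m) : IsProbabilityMeasure (jumpLaw J m) := by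
  have hm' : (0 : ℝ) < m := by exact_mod_cast hm
  refine ⟨?_⟩
  have h1 : J Set.univ = ENNReal.ofReal (J.real Set.univ) := by simp
  have h2 : J.real Set.univ / m ≤ 1 := by rw [div_le_one hm']; exact hJ
  have h3 : 0 ≤ J.real Set.univ := measureReal_nonneg
  simp only [jumpLaw, Measure.add_apply, Measure.smul_apply, measure_univ, smul_eq_mul, mul_one]
  rw [h1, ← ENNReal.ofReal_mul (by positivity), ← ENNReal.ofReal_add (by positivity) (by linarith),
    ← ENNReal.ofReal_one]
  congr 1
  ring

lemma integral_jumpLaw {E : Type*} [NormedAddCommGroup E] [NormedSpace ℝ E] [CompleteSpace E]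
    (J : Measure ℝ) [IsFiniteMeasure J] {m : ℕ} (hm : 0 < m)
    (hJ : J.real Set.univ ≤ m) {f : ℝ → E} (hf : Continuous f) {C : ℝ} (hC : ∀ x, ‖f x‖ ≤ C) :
    ∫ x, f x ∂(jumpLaw J m) =
      (1 / m : ℝ) • ∫ x, f x ∂J + (1 - J.real Set.univ / m) • f 0 := by
  have hm' : (0 : ℝ) < m := by exact_mod_cast hm
  have h2 : J.real Set.univ / m ≤ 1 := by rw [div_le_one hm']; exact hJ
  have := isProbabilityMeasure_jumpLaw J hm hJ
  have hi := Integrable.of_bound (μ := jumpLaw J m) hf.aestronglyMeasurable C (ae_of_all _ hC)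
  unfold jumpLaw at hi ⊢
  rw [integral_add_measure hi.left_of_add_measure hi.right_of_add_measure,
    integral_smul_measure, integral_smul_measure, integral_dirac,
    ENNReal.toReal_ofReal (by positivity), ENNReal.toReal_ofReal (by linarith)]

lemma charFun_jumpLaw (J : Measure ℝ) [IsFiniteMeasure J] {m : ℕ} (hm : 0 < m)
    (hJ : J.real Set.univ ≤ m) (ξ : ℝ) :
    charFun (jumpLaw J m) ξ = 1 + poissonExponent J ξ / m := by
  have hm' : (m : ℂ) ≠ 0 := by exact_mod_cast hm.ne'
  rw [poissonExponent, charFun_apply_real, charFun_apply_real,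
    integral_jumpLaw J hm hJ (C := 1) (by fun_prop) (fun x => by
      rw [← Complex.ofReal_mul, Complex.norm_exp_ofReal_mul_I]), Complex.real_smul,
      Complex.real_smul]
  generalize ∫ x : ℝ, Complex.exp (ξ * x * Complex.I) ∂J = c
  simp
  field_simp
  ring

/-- The limit `(1 + z / m) ^ m → exp z` along varying complex `z`. -/
lemma tendsto_one_add_div_pow {z : ℕ → ℂ} {z₀ : ℂ} (hz : Tendsto z atTop (𝓝 z₀)) {m : ℕ → ℕ}
    (hm : Tendsto m atTop atTop) (hm0 : ∀ k, m k ≠ 0) :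
    Tendsto (fun k => (1 + z k / m k) ^ m k) atTop (𝓝 (Complex.exp z₀)) := by
  have hinv : Tendsto (fun k => (m k : ℂ)⁻¹) atTop (𝓝 0) :=
    (tendsto_inv_atTop_nhds_zero_nat (𝕜 := ℂ)).comp hm
  have hw : Tendsto (fun k => z k / m k) atTop (𝓝 0) := by
    simpa [div_eq_mul_inv] using hz.mul hinv
  have hO := (Complex.log_sub_self_isBigO.comp_tendsto hw)
  have h1 : Tendsto (fun k => (m k : ℂ) * (Complex.log (1 + z k / m k) - z k / m k)) atTop
      (𝓝 0) := by
    refine ((Asymptotics.isBigO_refl (fun k => (m k : ℂ)) atTop).mul hO).trans_tendsto ?_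
    have := hz.mul hw
    rw [mul_zero] at this
    refine this.congr fun k => ?_
    have : (m k : ℂ) ≠ 0 := by exact_mod_cast hm0 k
    simp only [Function.comp_apply]
    field_simp
  have h2 : Tendsto (fun k => Complex.exp ((m k : ℂ) * Complex.log (1 + z k / m k))) atTop
      (𝓝 (Complex.exp z₀)) := by
    refine (Complex.continuous_exp.tendsto _).comp ?_
    have := h1.add hz
    rw [zero_add] at this
    refine this.congr fun k => ?_
    have : (m k : ℂ) ≠ 0 := by exact_mod_cast hm0 k
    field_simp
    ring
  refine h2.congr' ?_
  filter_upwards [hw.eventually_ne (show (0 : ℂ) ≠ -1 by simp)] with k hk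
  rw [Complex.exp_nat_mul, Complex.exp_log]
  intro h
  exact hk (by linear_combination h)

/-! ### Approximation of the matrix law -/

lemma norm_toHS_rankOne_one {N : ℕ} (u : Fin N → ℂ) :
    ‖toHS (rankOne 1 u)‖ = (∑ i, ‖u i‖ ^ 2) / N := by
  have h : ‖toHS (rankOne 1 u)‖ ^ 2 = ((∑ i, ‖u i‖ ^ 2) / N) ^ 2 := by
    rw [PiLp.norm_sq_eq_of_L2, Fintype.sum_prod_type, div_pow, sq (∑ i, ‖u i‖ ^ 2),
      Finset.sum_mul_sum, Finset.sum_div]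
    refine Finset.sum_congr rfl fun i _ => ?_
    rw [Finset.sum_div]
    refine Finset.sum_congr rfl fun j _ => ?_
    simp only [toHS, rankOne, Matrix.smul_apply, vecMulVec_apply, smul_eq_mul, norm_mul,
      Complex.norm_real, Pi.star_apply, norm_star, norm_div, Real.norm_natCast, norm_one]
    ring
  exact (sq_eq_sq₀ (norm_nonneg _) (by positivity)).1 h

lemma sq_quadForm_le {N : ℕ} (u : Fin N → ℂ) (v : HS N) :
    ((star u ⬝ᵥ (hermPart v).mulVec u).re / N) ^ 2 ≤
      ‖v‖ ^ 2 * ((∑ i, ‖u i‖ ^ 2) / N) ^ 2 := by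
  have h1 := inner_toHS_rankOne 1 u v
  rw [one_mul] at h1
  rw [← h1, ← norm_toHS_rankOne_one, ← mul_pow, ← sq_abs]
  refine pow_le_pow_left₀ (abs_nonneg _) ?_ 2
  rw [mul_comm]
  exact abs_real_inner_le_norm _ _

lemma measurable_toHS {N : ℕ} :
    Measurable (toHS : Matrix (Fin N) (Fin N) ℂ → HS N) := by
  refine (WithLp.measurable_toLp 2 (Fin N × Fin N → ℂ)).comp (measurable_pi_iff.2 fun p => ?_)
  have h1 : Measurable fun f : Fin N → Fin N → ℂ => f p.1 p.2 := by fun_prop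
  exact h1

section Approximation

variable {Ω : Type*} [MeasurableSpace Ω]

lemma measurable_rankOne {N : ℕ} {u : Ω → Fin N → ℂ} (hu : Measurable u) :
    Measurable fun p : ℝ × Ω => toHS (rankOne p.1 (u p.2)) := by
  have hui : ∀ i, Measurable fun p : ℝ × Ω => u p.2 i := fun i =>
    (measurable_pi_iff.1 hu i).comp measurable_snd
  refine (WithLp.measurable_toLp 2 (Fin N × Fin N → ℂ)).comp (measurable_pi_iff.2 fun p => ?_)
  have h1 : Measurable fun q : ℝ × Ω => ((q.1 / N : ℝ) : ℂ) * (u q.2 p.1 * star (u q.2 p.2)) :=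
    (Complex.measurable_ofReal.comp (measurable_fst.div_const _)).mul
      ((hui _).mul (continuous_star.measurable.comp (hui _)))
  exact h1

lemma measurable_quadForm {N : ℕ} {u : Ω → Fin N → ℂ} (hu : Measurable u) (v : HS N) :
    Measurable fun ω => (star (u ω) ⬝ᵥ (hermPart v).mulVec (u ω)).re / (N : ℝ) := by
  have h1 : Measurable fun ω => (inner ℝ (toHS (rankOne 1 (u ω))) v : ℝ) :=
    ((measurable_rankOne hu).comp (measurable_prodMk_left (x := (1 : ℝ)))).inner measurable_const
  simpa only [inner_toHS_rankOne, one_mul] using h1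

lemma integrable_one_add_sq_quadForm {P : Measure Ω} [IsProbabilityMeasure P] {N : ℕ}
    {u : Ω → Fin N → ℂ} (hu : Measurable u)
    (hui : Integrable (fun ω => ((∑ i, ‖u ω i‖ ^ 2) / N) ^ 2) P) (v : HS N) (C : ℝ) :
    Integrable (fun ω => C * (1 + ((star (u ω) ⬝ᵥ (hermPart v).mulVec (u ω)).re / N) ^ 2)) P := by
  have h1 : Integrable (fun ω => ((star (u ω) ⬝ᵥ (hermPart v).mulVec (u ω)).re / N) ^ 2) P := by
    refine (hui.const_mul (‖v‖ ^ 2)).mono'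
      ((measurable_quadForm hu v).pow_const 2).aestronglyMeasurable (ae_of_all _ fun ω => ?_)
    rw [Real.norm_of_nonneg (sq_nonneg _)]
    exact sq_quadForm_le (u ω) v
  exact ((integrable_const 1).add h1).const_mul C

/-- Number of factors in the approximation; large enough for `jumpLaw` to be a probability
measure. -/
def jumpCount (γ : ℝ) (σ : Measure ℝ) (k : ℕ) : ℕ :=
  k + 1 + ⌈(jumpMeasure γ σ k).real Set.univ⌉₊

lemma jumpCount_pos (γ : ℝ) (σ : Measure ℝ) (k : ℕ) : 0 < jumpCount γ σ k := by
  unfold jumpCount; omega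

lemma le_jumpCount (γ : ℝ) (σ : Measure ℝ) (k : ℕ) :
    (jumpMeasure γ σ k).real Set.univ ≤ jumpCount γ σ k := by
  refine (Nat.le_ceil _).trans ?_
  unfold jumpCount
  exact_mod_cast Nat.le_add_left _ _

lemma tendsto_jumpCount (γ : ℝ) (σ : Measure ℝ) : Tendsto (jumpCount γ σ) atTop atTop := by
  refine tendsto_atTop_mono (fun k => ?_) tendsto_id
  unfold jumpCount
  exact (Nat.le_succ k).trans (Nat.le_add_right _ _)

/-- The law of the increments `(x / N) u u*`, where `x` is drawn from the `k`-th approximating jump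
law and `u` is an independent copy of the random vector. -/
def stepLaw (γ : ℝ) (σ : Measure ℝ) (P : Measure Ω) {N : ℕ} (u : Ω → Fin N → ℂ) (k : ℕ) :
    Measure (HS N) :=
  ((jumpLaw (jumpMeasure γ σ k) (jumpCount γ σ k)).prod P).map
    fun p : ℝ × Ω => toHS (rankOne p.1 (u p.2))

instance isProbabilityMeasure_jumpLaw_jumpMeasure (γ : ℝ) (σ : Measure ℝ) [IsFiniteMeasure σ]
    (k : ℕ) : IsProbabilityMeasure (jumpLaw (jumpMeasure γ σ k) (jumpCount γ σ k)) :=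
  isProbabilityMeasure_jumpLaw _ (jumpCount_pos γ σ k) (le_jumpCount γ σ k)

lemma isProbabilityMeasure_stepLaw (γ : ℝ) (σ : Measure ℝ) [IsFiniteMeasure σ] (P : Measure Ω)
    [IsProbabilityMeasure P] {N : ℕ} {u : Ω → Fin N → ℂ} (hu : Measurable u) (k : ℕ) :
    IsProbabilityMeasure (stepLaw γ σ P u k) :=
  Measure.isProbabilityMeasure_map (measurable_rankOne hu).aemeasurable

lemma charFun_stepLaw (γ : ℝ) (σ : Measure ℝ) [IsFiniteMeasure σ] (P : Measure Ω)
    [IsProbabilityMeasure P] {N : ℕ} {u : Ω → Fin N → ℂ} (hu : Measurable u)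
    (hui : Integrable (fun ω => ((∑ i, ‖u ω i‖ ^ 2) / N) ^ 2) P) (k : ℕ) (v : HS N) :
    charFun (stepLaw γ σ P u k) v = 1 + (∫ ω, poissonExponent (jumpMeasure γ σ k)
      ((star (u ω) ⬝ᵥ (hermPart v).mulVec (u ω)).re / N) ∂P) / jumpCount γ σ k := by
  have hmeas := measurable_rankOne hu
  have hexp : Continuous fun y : HS N => Complex.exp ((inner ℝ y v : ℝ) * Complex.I) := by
    fun_prop
  rw [charFun_apply, stepLaw, integral_map hmeas.aemeasurable hexp.aestronglyMeasurable,
    integral_prod_symm (fun p : ℝ × Ω =>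
      Complex.exp ((inner ℝ (toHS (rankOne p.1 (u p.2))) v : ℝ) * Complex.I)) (Integrable.of_bound
      (hexp.measurable.comp hmeas).aestronglyMeasurable 1 (ae_of_all _ fun p => by
        rw [Complex.norm_exp_ofReal_mul_I]))]
  have h1 : ∀ ω, ∫ x, Complex.exp ((inner ℝ (toHS (rankOne x (u ω))) v : ℝ) * Complex.I)
      ∂(jumpLaw (jumpMeasure γ σ k) (jumpCount γ σ k)) =
      1 + poissonExponent (jumpMeasure γ σ k)
        ((star (u ω) ⬝ᵥ (hermPart v).mulVec (u ω)).re / N) / jumpCount γ σ k := fun ω => by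
    rw [← charFun_jumpLaw _ (jumpCount_pos γ σ k) (le_jumpCount γ σ k), charFun_apply_real]
    refine integral_congr_ae (ae_of_all _ fun x => ?_)
    dsimp only
    rw [inner_toHS_rankOne, mul_comm x]
    push_cast
    rfl
  have h2 : Integrable (fun ω => poissonExponent (jumpMeasure γ σ k)
      ((star (u ω) ⬝ᵥ (hermPart v).mulVec (u ω)).re / N)) P := by
    refine (integrable_one_add_sq_quadForm hu hui v _).mono' ?_
      (ae_of_all _ fun ω => norm_poissonExponent_le γ σ k _)
    exact ((measurable_charFun.comp (measurable_quadForm hu v)).sub_const _).aestronglyMeasurable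
  simp only [h1]
  rw [integral_add (integrable_const _) (h2.div_const _), integral_div]
  simp

/-- The convolution powers of `stepLaw` have the Fourier transform of the matrix law in the
limit. -/
lemma tendsto_charFun_convPow_stepLaw (γ : ℝ) (σ : Measure ℝ) [IsFiniteMeasure σ] (P : Measure Ω)
    [IsProbabilityMeasure P] {N : ℕ} {u : Ω → Fin N → ℂ} (hu : Measurable u)
    (hui : Integrable (fun ω => ((∑ i, ‖u ω i‖ ^ 2) / N) ^ 2) P) (v : HS N) :
    Tendsto (fun k => charFun (convPow (stepLaw γ σ P u k) (jumpCount γ σ k * N)) v) atTop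
      (𝓝 (Complex.exp ((N : ℂ) * ∫ ω, levyExponent γ σ
        ((star (u ω) ⬝ᵥ (hermPart v).mulVec (u ω)).re / N) ∂P))) := by
  have hlim : Tendsto (fun k => ∫ ω, poissonExponent (jumpMeasure γ σ k)
      ((star (u ω) ⬝ᵥ (hermPart v).mulVec (u ω)).re / N) ∂P) atTop
      (𝓝 (∫ ω, levyExponent γ σ ((star (u ω) ⬝ᵥ (hermPart v).mulVec (u ω)).re / N) ∂P)) :=
    tendsto_integral_of_dominated_convergence _
      (fun k => ((measurable_charFun.comp
        (measurable_quadForm hu v)).sub_const _).aestronglyMeasurable)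
      (integrable_one_add_sq_quadForm hu hui v _)
      (fun k => ae_of_all _ fun ω => norm_poissonExponent_le γ σ k _)
      (ae_of_all _ fun ω => tendsto_poissonExponent γ σ _)
  have h := (tendsto_one_add_div_pow hlim (tendsto_jumpCount γ σ)
    fun k => (jumpCount_pos γ σ k).ne').pow N
  rw [← Complex.exp_nat_mul] at h
  refine h.congr fun k => ?_
  have := isProbabilityMeasure_stepLaw γ σ P hu k
  rw [charFun_convPow, charFun_stepLaw γ σ P hu hui, pow_mul]

/-- The law of a matrix with the prescribed Fourier transform is the weak limit of the laws of
sums of independent rank-one matrices. -/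
lemma tendsto_integral_convPow_stepLaw (γ : ℝ) (σ : Measure ℝ) [IsFiniteMeasure σ] (P : Measure Ω)
    [IsProbabilityMeasure P] {N : ℕ} {u : Ω → Fin N → ℂ} (hu : Measurable u)
    (hui : Integrable (fun ω => ((∑ i, ‖u ω i‖ ^ 2) / N) ^ 2) P)
    {X : Ω → Matrix (Fin N) (Fin N) ℂ} (hX : Measurable X) (hXh : ∀ ω, (X ω).IsHermitian)
    (hlaw : ∀ A : Matrix (Fin N) (Fin N) ℂ, A.IsHermitian →
      ∫ ω, Complex.exp (Complex.I * (A * X ω).trace) ∂P =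
      Complex.exp ((N : ℂ) * ∫ ω, levyExponent γ σ ((star (u ω) ⬝ᵥ A.mulVec (u ω)).re / N) ∂P))
    {F : HS N → ℝ} (hF : Continuous F) {C : ℝ} (hC : ∀ v, |F v| ≤ C) :
    Tendsto (fun k => ∫ v, F v ∂(convPow (stepLaw γ σ P u k) (jumpCount γ σ k * N))) atTop
      (𝓝 (∫ ω, F (toHS (X ω)) ∂P)) := by
  have hm : Measurable fun ω => toHS (X ω) := measurable_toHS.comp hX
  have hprob := fun k => isProbabilityMeasure_stepLaw γ σ P hu k
  have hprobX : IsProbabilityMeasure (P.map fun ω => toHS (X ω)) :=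
    Measure.isProbabilityMeasure_map hm.aemeasurable
  let μs : ℕ → ProbabilityMeasure (HS N) := fun k =>
    ⟨convPow (stepLaw γ σ P u k) (jumpCount γ σ k * N), inferInstance⟩
  let μ : ProbabilityMeasure (HS N) := ⟨P.map fun ω => toHS (X ω), hprobX⟩
  have hweak : Tendsto μs atTop (𝓝 μ) := by
    refine ProbabilityMeasure.tendsto_of_tendsto_charFun fun v => ?_
    have hexp : Continuous fun y : HS N => Complex.exp ((inner ℝ y v : ℝ) * Complex.I) := by
      fun_prop
    have h1 : charFun (P.map fun ω => toHS (X ω)) v =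
        Complex.exp ((N : ℂ) * ∫ ω, levyExponent γ σ
          ((star (u ω) ⬝ᵥ (hermPart v).mulVec (u ω)).re / N) ∂P) := by
      rw [← hlaw _ (isHermitian_hermPart v), charFun_apply,
        integral_map hm.aemeasurable hexp.aestronglyMeasurable]
      refine integral_congr_ae (ae_of_all _ fun ω => ?_)
      dsimp only
      rw [inner_toHS (hXh ω), mul_comm]
    have h2 := tendsto_charFun_convPow_stepLaw γ σ P hu hui v
    rw [← h1] at h2
    exact h2
  have h := ProbabilityMeasure.tendsto_iff_forall_integral_tendsto.1 hweak
    (BoundedContinuousFunction.ofNormedAddCommGroup F hF C hC)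
  have h3 : ∫ v, F v ∂(P.map fun ω => toHS (X ω)) = ∫ ω, F (toHS (X ω)) ∂P :=
    integral_map hm.aemeasurable hF.aestronglyMeasurable
  rw [← h3]
  exact h

end Approximation

/-! ### Concentration -/

lemma sq_increment_le {t V K s x : ℝ} (hV : 0 ≤ V) (hK : 0 ≤ K) (hs : 0 ≤ s) :
    (|t| * min V (K * (|x| * s))) ^ 2 ≤
      t ^ 2 * (V + K) ^ 2 * (min 1 (x ^ 2) * (1 + s ^ 2)) := by
  have h0 : 0 ≤ min V (K * (|x| * s)) := by positivity
  have h1 : min V (K * (|x| * s)) ^ 2 ≤ (V + K) ^ 2 * (min 1 (x ^ 2) * (1 + s ^ 2)) := by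
    rcases le_total 1 (x ^ 2) with hx | hx
    · rw [min_eq_left hx]
      have h2 : min V (K * (|x| * s)) ^ 2 ≤ V ^ 2 := pow_le_pow_left₀ h0 (min_le_left _ _) 2
      nlinarith [mul_nonneg hV hK, sq_nonneg ((V + K) * s), sq_nonneg K]
    · rw [min_eq_right hx]
      have h2 : min V (K * (|x| * s)) ^ 2 ≤ (K * (|x| * s)) ^ 2 :=
        pow_le_pow_left₀ h0 (min_le_right _ _) 2
      have h3 : (K * (|x| * s)) ^ 2 = K ^ 2 * (x ^ 2 * s ^ 2) := by
        rw [mul_pow, mul_pow, sq_abs]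
      have h4 : K ^ 2 ≤ (V + K) ^ 2 := pow_le_pow_left₀ hK (by linarith) 2
      have h5 : x ^ 2 * s ^ 2 ≤ x ^ 2 * (1 + s ^ 2) :=
        mul_le_mul_of_nonneg_left (by linarith) (sq_nonneg x)
      rw [h3] at h2
      exact h2.trans (mul_le_mul h4 h5 (by positivity) (by positivity))
  rw [mul_pow, sq_abs, mul_assoc]
  exact mul_le_mul_of_nonneg_left h1 (sq_nonneg t)

section Concentration

variable {Ω : Type*} [MeasurableSpace Ω]

/-- The total truncated second moment of the jumps is bounded uniformly in the approximation. -/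
lemma integral_min_jumpLaw_le (γ : ℝ) (σ : Measure ℝ) [IsFiniteMeasure σ] (k : ℕ) :
    jumpCount γ σ k * ∫ x, min 1 (x ^ 2) ∂(jumpLaw (jumpMeasure γ σ k) (jumpCount γ σ k)) ≤
      2 * σ.real Set.univ + (|γ| + σ.real Set.univ) ^ 2 := by
  have hm : (0 : ℝ) < jumpCount γ σ k := by exact_mod_cast jumpCount_pos γ σ k
  rw [integral_jumpLaw _ (jumpCount_pos γ σ k) (le_jumpCount γ σ k) (C := 1)
    (f := fun x : ℝ => min 1 (x ^ 2)) (by fun_prop)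
    (fun x => by rw [Real.norm_of_nonneg (by positivity)]; exact min_le_left _ _)]
  refine le_trans (le_of_eq ?_) (integral_min_jumpMeasure_le γ σ k)
  simp
  field_simp

/-- Sub-Gaussian bound at small `t` for the exponential moments of a linear statistic. The
constant in the exponent is `N` times a constant independent of `N`, as the sum over
all increments of the mean of `min 1 (x ^ 2)`, with `x` the jump, is of order `N`. -/
lemma integral_exp_linStat_le (γ : ℝ) (σ : Measure ℝ) [IsFiniteMeasure σ] (P : Measure Ω)
    [IsProbabilityMeasure P] {N : ℕ} (hN : 1 ≤ N) {u : Ω → Fin N → ℂ} (hu : Measurable u)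
    (hui : Integrable (fun ω => ((∑ i, ‖u ω i‖ ^ 2) / N) ^ 2) P)
    {X : Ω → Matrix (Fin N) (Fin N) ℂ} (hX : Measurable X) (hXh : ∀ ω, (X ω).IsHermitian)
    (hlaw : ∀ A : Matrix (Fin N) (Fin N) ℂ, A.IsHermitian →
      ∫ ω, Complex.exp (Complex.I * (A * X ω).trace) ∂P =
      Complex.exp ((N : ℂ) * ∫ ω, levyExponent γ σ ((star (u ω) ⬝ᵥ A.mulVec (u ω)).re / N) ∂P))
    {g : ℝ → ℝ} {K : NNReal} (hg : LipschitzWith K g) (hgBV : BoundedVariationOn g Set.univ)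
    {t : ℝ} (ht : |t| * (eVariationOn g Set.univ).toReal ≤ 1) :
    ∫ ω, Real.exp (t * N * linStat g (toHS (X ω))) ∂P ≤
      Real.exp (∫ ω, t * N * linStat g (toHS (X ω)) ∂P +
        N * (t ^ 2 * (((eVariationOn g Set.univ).toReal + K) ^ 2 *
          ((2 * σ.real Set.univ + (|γ| + σ.real Set.univ) ^ 2) *
          (1 + ∫ ω, ((∑ i, ‖u ω i‖ ^ 2) / N) ^ 2 ∂P))))) := by
  set V := (eVariationOn g Set.univ).toReal with hV
  have hV0 : 0 ≤ V := ENNReal.toReal_nonneg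
  set L := 2 * σ.real Set.univ + (|γ| + σ.real Set.univ) ^ 2 with hL
  set s : Ω → ℝ := fun ω => (∑ i, ‖u ω i‖ ^ 2) / N with hs
  have hs0 : ∀ ω, 0 ≤ s ω := fun ω => by positivity
  have hsm : Measurable s := by
    have : ∀ i, Measurable fun ω => u ω i := fun i => measurable_pi_iff.1 hu i
    exact (Finset.measurable_sum _ fun i _ => (this i).norm.pow_const 2).div_const _
  have hN' : (0 : ℝ) < N := by exact_mod_cast hN
  obtain ⟨C, hC⟩ := exists_abs_linStat_le hgBV
  set F : HS N → ℝ := fun v => t * N * linStat g v with hF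
  have hFc : Continuous F := (continuous_linStat hg.continuous).const_mul _
  have hFC : ∀ v, |F v| ≤ |t * N| * C := fun v => by
    rw [hF, abs_mul]; exact mul_le_mul_of_nonneg_left (hC N v) (abs_nonneg _)
  set φ : ℝ × Ω → ℝ := fun p => |t| * min V (K * (|p.1| * s p.2)) with hφ
  have hφm : Measurable φ := by fun_prop
  have hinc : ∀ v (p : ℝ × Ω), |F (v + toHS (rankOne p.1 (u p.2))) - F v| ≤ φ p := fun v p => by
    have h := abs_linStat_add_rankOne_sub_le hN hg hgBV v p.1 (u p.2)
    rw [hF]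
    dsimp only
    rw [← mul_sub, abs_mul, abs_mul, Nat.abs_cast, mul_assoc, hφ]
    refine mul_le_mul_of_nonneg_left ?_ (abs_nonneg t)
    exact (le_inv_mul_iff₀ hN').1 h
  have hφ1 : ∀ p, φ p ≤ 1 := fun p =>
    (mul_le_mul_of_nonneg_left (min_le_left _ _) (abs_nonneg t)).trans ht
  have hstep : ∀ k, (jumpCount γ σ k * N : ℕ) *
      ∫ p, φ p ^ 2 ∂((jumpLaw (jumpMeasure γ σ k) (jumpCount γ σ k)).prod P) ≤
      N * (t ^ 2 * ((V + K) ^ 2 * (L * (1 + ∫ ω, s ω ^ 2 ∂P)))) := fun k => by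
    set ν := jumpLaw (jumpMeasure γ σ k) (jumpCount γ σ k)
    have hi1 : Integrable (fun x : ℝ => min 1 (x ^ 2)) ν :=
      integrable_of_abs_le (by fun_prop) (C := 1) fun x => by
        rw [abs_of_nonneg (by positivity)]; exact min_le_left _ _
    have hi2 : Integrable (fun ω => 1 + s ω ^ 2) P := (integrable_const 1).add hui
    have h1 : ∫ p, φ p ^ 2 ∂(ν.prod P) ≤
        t ^ 2 * (V + K) ^ 2 * ((∫ x, min 1 (x ^ 2) ∂ν) * (1 + ∫ ω, s ω ^ 2 ∂P)) := by
      have h2 : ∫ ω, (1 + s ω ^ 2) ∂P = 1 + ∫ ω, s ω ^ 2 ∂P := by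
        rw [integral_add (integrable_const 1) hui]; simp [hs]
      rw [← h2, ← integral_prod_mul, ← integral_const_mul]
      refine integral_mono_of_nonneg (ae_of_all _ fun p => sq_nonneg _)
        ((hi1.mul_prod hi2).const_mul _) (ae_of_all _ fun p => ?_)
      exact sq_increment_le hV0 K.2 (hs0 p.2)
    have h3 := integral_min_jumpLaw_le γ σ k
    have h4 : 0 ≤ 1 + ∫ ω, s ω ^ 2 ∂P := by
      have : 0 ≤ ∫ ω, s ω ^ 2 ∂P := integral_nonneg fun ω => sq_nonneg _
      linarith
    have hV2 : 0 ≤ t ^ 2 * (V + K) ^ 2 := by positivity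
    push_cast
    calc (jumpCount γ σ k : ℝ) * N * ∫ p, φ p ^ 2 ∂(ν.prod P)
        ≤ jumpCount γ σ k * N *
          (t ^ 2 * (V + K) ^ 2 * ((∫ x, min 1 (x ^ 2) ∂ν) * (1 + ∫ ω, s ω ^ 2 ∂P))) :=
          mul_le_mul_of_nonneg_left h1 (by positivity)
      _ = N * (t ^ 2 * (V + K) ^ 2) * (1 + ∫ ω, s ω ^ 2 ∂P) *
          (jumpCount γ σ k * ∫ x, min 1 (x ^ 2) ∂ν) := by ring
      _ ≤ N * (t ^ 2 * (V + K) ^ 2) * (1 + ∫ ω, s ω ^ 2 ∂P) * L :=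
          mul_le_mul_of_nonneg_left h3 (by positivity)
      _ = _ := by ring
  have hlimF := tendsto_integral_convPow_stepLaw γ σ P hu hui hX hXh hlaw hFc hFC
  have hlimE := tendsto_integral_convPow_stepLaw γ σ P hu hui hX hXh hlaw
    (F := fun v => Real.exp (F v)) (by fun_prop) (C := Real.exp (|t * N| * C)) (fun v => by
      rw [abs_of_pos (Real.exp_pos _)]
      exact Real.exp_le_exp.2 ((le_abs_self _).trans (hFC v)))
  refine le_of_tendsto_of_tendsto' hlimE
    ((Real.continuous_exp.tendsto _).comp (hlimF.add_const _)) fun k => ?_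
  refine (integral_exp_convPow_le (measurable_rankOne hu) hφm hφ1 (jumpCount γ σ k * N)
    hFc.measurable hFC hinc).trans (Real.exp_le_exp.2 ?_)
  exact add_le_add le_rfl (hstep k)

/-- Chernoff's inequality for one tail. -/
lemma measureReal_le_of_integral_exp_le {P : Measure Ω} [IsProbabilityMeasure P] {Y : Ω → ℝ}
    (hY : Measurable Y) {C : ℝ} (hC : ∀ ω, |Y ω| ≤ C) {a τ R : ℝ} (hτ : 0 ≤ τ)
    (h : ∫ ω, Real.exp (τ * Y ω) ∂P ≤ Real.exp (∫ ω, τ * Y ω ∂P + R)) :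
    P.real {ω | a ≤ Y ω - ∫ ω', Y ω' ∂P} ≤ Real.exp (-τ * a + R) := by
  have hi : Integrable (fun ω => Real.exp (τ * Y ω)) P :=
    integrable_of_abs_le (by fun_prop) (C := Real.exp (τ * C)) fun ω => by
      rw [abs_of_pos (Real.exp_pos _)]
      exact Real.exp_le_exp.2 (mul_le_mul_of_nonneg_left ((le_abs_self _).trans (hC ω)) hτ)
  have h1 := measure_ge_le_exp_mul_mgf (X := Y) (μ := P) (a + ∫ ω, Y ω ∂P) hτ hi
  rw [integral_const_mul] at h
  have h2 : {ω | a ≤ Y ω - ∫ ω', Y ω' ∂P} = {ω | a + ∫ ω, Y ω ∂P ≤ Y ω} := by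
    ext ω; simp only [Set.mem_ofPred_eq, le_sub_iff_add_le]
  rw [h2]
  calc _ ≤ _ := h1
    _ ≤ Real.exp (-τ * (a + ∫ ω, Y ω ∂P)) * Real.exp (τ * ∫ ω, Y ω ∂P + R) :=
        mul_le_mul_of_nonneg_left h (Real.exp_pos _).le
    _ = _ := by
        rw [← Real.exp_add]
        congr 1
        ring

end Concentration

theorem stmt18
    {Ω : Type*} [MeasurableSpace Ω] (P : Measure Ω) [IsProbabilityMeasure P]
    (γ : ℝ) (σ : Measure ℝ) [IsFiniteMeasure σ]
    (U : (N : ℕ) → Ω → Fin N → ℂ) (hUmeas : ∀ N, Measurable (U N))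
    -- sup_N E[(‖U_N‖₂²/N)²] < ∞ :
    (hU4 : ∃ C : ℝ, ∀ N : ℕ, 1 ≤ N →
      Integrable (fun ω => ((∑ i, ‖U N ω i‖ ^ 2) / N) ^ 2) P ∧
      ∫ ω, ((∑ i, ‖U N ω i‖ ^ 2) / N) ^ 2 ∂P ≤ C)
    (M : (N : ℕ) → Ω → Matrix (Fin N) (Fin N) ℂ)
    (hMmeas : ∀ N, Measurable (M N))
    (hHerm : ∀ N ω, (M N ω).IsHermitian)
    (hlaw : HasMatrixLaw P γ σ U M)
    -- g is Lipschitz with finite total variation: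
    (g : ℝ → ℝ) (K : NNReal) (hgLip : LipschitzWith K g)
    (hgBV : BoundedVariationOn g Set.univ) :
    ∀ ε : ℝ, 0 < ε → ∃ δ : ℝ, 0 < δ ∧ ∀ N : ℕ, 1 ≤ N →
      P {ω | ε < |(N : ℝ)⁻¹ * ∑ i, g ((hHerm N ω).eigenvalues i) -
          ∫ ω', (N : ℝ)⁻¹ * ∑ i, g ((hHerm N ω').eigenvalues i) ∂P|}
        ≤ ENNReal.ofReal (2 * Real.exp (-(N : ℝ) * δ)) := by
  intro ε hε
  obtain ⟨C, hC⟩ := hU4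
  obtain ⟨B, hB⟩ := exists_abs_linStat_le hgBV
  set V := (eVariationOn g Set.univ).toReal with hV
  have hV0 : 0 ≤ V := ENNReal.toReal_nonneg
  set L := 2 * σ.real Set.univ + (|γ| + σ.real Set.univ) ^ 2 with hL
  have hL0 : 0 ≤ L := by positivity
  have hC0 : 0 ≤ C := (integral_nonneg fun ω => sq_nonneg _).trans (hC 1 le_rfl).2
  set D := (V + K) ^ 2 * (L * (1 + C)) with hD
  have hD0 : 0 ≤ D := by positivity
  -- The exponent `-N (τ ε - τ² D)` of Chernoff's bound is at most `-N τ ε / 2` for small `τ`.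
  set τ := min (1 / (V + 1)) (ε / (2 * (D + 1))) with hτ
  have hτ0 : 0 < τ := by positivity
  have hτV : τ * V ≤ 1 := by
    have h1 : τ ≤ 1 / (V + 1) := min_le_left _ _
    rw [le_div_iff₀ (by positivity)] at h1
    linarith
  have hτD : τ * D ≤ ε / 2 := by
    have h1 : τ ≤ ε / (2 * (D + 1)) := min_le_right _ _
    rw [le_div_iff₀ (by positivity)] at h1
    linarith
  refine ⟨τ * ε / 2, by positivity, fun N hN => ?_⟩
  have hN' : (0 : ℝ) < N := by exact_mod_cast hN
  simp only [← linStat_toHS g (hHerm N _)]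
  set X : Ω → ℝ := fun ω => linStat g (toHS (M N ω)) with hX
  have hXm : Measurable X :=
    (continuous_linStat hgLip.continuous).measurable.comp (measurable_toHS.comp (hMmeas N))
  have hmom : ∀ t : ℝ, |t| = τ →
      ∫ ω, Real.exp (t * N * X ω) ∂P ≤
        Real.exp (∫ ω, t * N * X ω ∂P + N * (τ ^ 2 * D)) := fun t ht => by
    refine (integral_exp_linStat_le γ σ P hN (hUmeas N) (hC N hN).1 (hMmeas N) (hHerm N)
      (hlaw N hN) hgLip hgBV (t := t) (by rw [ht]; exact hτV)).trans (Real.exp_le_exp.2 ?_)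
    have h1 : t ^ 2 = τ ^ 2 := by rw [← sq_abs, ht]
    have h2 := (hC N hN).2
    rw [h1]
    exact add_le_add le_rfl (mul_le_mul_of_nonneg_left (mul_le_mul_of_nonneg_left
      (mul_le_mul_of_nonneg_left (mul_le_mul_of_nonneg_left (by linarith) hL0)
      (sq_nonneg (V + K))) (sq_nonneg τ)) hN'.le)
  have htail : ∀ c : ℝ, |c| = 1 →
      P.real {ω | N * ε ≤ c * N * X ω - ∫ ω', c * N * X ω' ∂P} ≤
        Real.exp (-(N : ℝ) * (τ * ε / 2)) := fun c hc => by
    have h1 := hmom (τ * c) (by rw [abs_mul, hc, abs_of_pos hτ0, mul_one])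
    have h2 := measureReal_le_of_integral_exp_le (P := P) (Y := fun ω => c * N * X ω)
      (hXm.const_mul _) (C := N * B) (fun ω => by
        rw [abs_mul, abs_mul, hc, one_mul, Nat.abs_cast]
        exact mul_le_mul_of_nonneg_left (hB N _) hN'.le) (a := N * ε) hτ0.le
      (R := N * (τ ^ 2 * D)) (by simpa only [mul_assoc] using h1)
    refine h2.trans (Real.exp_le_exp.2 ?_)
    have h3 : N * τ * (τ * D) ≤ N * τ * (ε / 2) :=
      mul_le_mul_of_nonneg_left hτD (by positivity)
    linarith
  have hsub : {ω | ε < |X ω - ∫ ω', X ω' ∂P|} ⊆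
      {ω | N * ε ≤ 1 * N * X ω - ∫ ω', 1 * N * X ω' ∂P} ∪
      {ω | N * ε ≤ -1 * N * X ω - ∫ ω', -1 * N * X ω' ∂P} := fun ω hω => by
    simp only [Set.mem_union, Set.mem_ofPred_eq, integral_const_mul] at hω ⊢
    rcases lt_abs.1 hω with h | h
    · left
      nlinarith [mul_le_mul_of_nonneg_left h.le hN'.le]
    · right
      nlinarith [mul_le_mul_of_nonneg_left h.le hN'.le]
  have hfin : P.real {ω | ε < |X ω - ∫ ω', X ω' ∂P|} ≤
      2 * Real.exp (-(N : ℝ) * (τ * ε / 2)) := by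
    refine (measureReal_mono hsub).trans ((measureReal_union_le _ _).trans ?_)
    have h1 := htail 1 (by simp)
    have h2 := htail (-1) (by simp)
    linarith
  rw [← ofReal_measureReal]
  exact ENNReal.ofReal_le_ofReal hfin

end
end

section
/- Let N ≥ 1 and t > 0. Let U be a random column vector in ℂ^N with E[U U*] = I_N (entrywise expectation), and let M be a random N×N Hermitian matrix whose law satisfies E[exp(i·Tr(B·M))] = exp( −t · E[ |U* B U| ] ) for every N×N Hermitian matrix B (this is the law P_{U}^{(C_t)} associated with the Cauchy law of parameter t). Then for every N×N Hermitian matrix A and every z ∈ ℂ with Im(z) > 0, the matrix z·I_N − A − M is almost surely invertible, the matrix (z + i·t)·I_N − A is invertible, and E[ (z·I_N − A − M)^{-1} ] = ( (z + i·t)·I_N − A )^{-1}, the expectation being entrywise. -/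
/-!
The resolvent `R(X) = (z - A - X)⁻¹`, `Im z > 0`, is bounded and holomorphic for `X` in the lower
half-plane of matrices, so it should be a superposition of the characters `exp (-i Tr (B X))` with
`B` positive semidefinite. For such `B` one has `U* B U ≥ 0`, hence
`E |U* B U| = Tr B` and `E exp (-i Tr (B M)) = exp (-t Tr B)` (`integral_char`): on these characters
the mean along `M` is evaluation at the scalar matrix `-it`. Evaluating `R` at `-it` gives the claim.

The superposition is built by elementary means. Call a function a multiplier if multiplication by it
preserves the class of bounded functions `f` for which `E[f(M) exp (-i Tr (B M))]` is the value at
`-it`. Multipliers form an algebra (`multipliers`) containing all absolutely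
convergent superpositions of characters (`mem_multipliers_of_integral`). Two families are used:

* `det (z - A - X)⁻¹`, which up to a constant is the Gaussian integral of `exp (i x* (z - A - X) x)`
  over `ℂ^N`, a superposition with frequencies `x x*` (`inv_det_mem`);
* the scalar resolvents `w / (w - Tr (B X))` with `w = i (n + 1)`, by the Laplace transform along the
  ray through `B` (`damping_mem`).

The product of `Tr (B X)` with a scalar resolvent is again a multiplier, and rank-one matrices `B`
span all matrices. Hence any polynomial in the entries of `X`, in particular an entry of the
adjugate of `z - A - X`, becomes a multiplier after multiplication by a fixed power of a product of
scalar resolvents (`regularizable`). Since `R = det⁻¹ • adjugate`, the entries of `R` times that power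
are multipliers. These products are dominated by the entries of `R`, which are at most `1 / Im z`
(`norm_resolvent_le`), and converge to them as `n → ∞`, so dominated convergence removes the
regularization (`integral_resolvent`).
-/

open MeasureTheory ProbabilityTheory Matrix Filter Topology

noncomputable section

namespace CauchyMatrix

open scoped ComplexOrder

variable {N : ℕ} {Ω : Type*} [MeasurableSpace Ω]

/-! ### Characters and the lower half-plane of matrices -/

/-- The character `X ↦ exp (-i Tr (B X))` with matrix frequency `B`. -/
def char (B X : Matrix (Fin N) (Fin N) ℂ) : ℂ := Complex.exp (-Complex.I * (B * X).trace)

/-- The closed lower half-plane of matrices: `Im Tr (B X) ≤ 0` for every positive semidefinite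
frequency `B`. For these `X` every character with such a frequency is bounded by `1`. -/
def Lower (X : Matrix (Fin N) (Fin N) ℂ) : Prop :=
  ∀ B : Matrix (Fin N) (Fin N) ℂ, B.PosSemidef → (B * X).trace.im ≤ 0

lemma norm_char_le {B X : Matrix (Fin N) (Fin N) ℂ} (hX : Lower X) (hB : B.PosSemidef) :
    ‖char B X‖ ≤ 1 := by
  rw [char, Complex.norm_exp, Real.exp_le_one_iff]
  simpa using hX B hB

lemma char_add (B C X : Matrix (Fin N) (Fin N) ℂ) :
    char (B + C) X = char B X * char C X := by
  rw [char, char, char, ← Complex.exp_add, Matrix.add_mul, Matrix.trace_add, mul_add]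

lemma im_trace_mul_eq_zero {B H : Matrix (Fin N) (Fin N) ℂ} (hB : B.IsHermitian)
    (hH : H.IsHermitian) : (B * H).trace.im = 0 := by
  rw [← Complex.conj_eq_iff_im, starRingEnd_apply, ← Matrix.trace_conjTranspose,
    Matrix.conjTranspose_mul, hB.eq, hH.eq, Matrix.trace_mul_comm]

lemma lower_of_isHermitian {H : Matrix (Fin N) (Fin N) ℂ} (hH : H.IsHermitian) : Lower H :=
  fun _ hB => (im_trace_mul_eq_zero hB.isHermitian hH).le

lemma lower_scalar {t : ℝ} (ht : 0 < t) :
    Lower (-((Complex.I * t) • (1 : Matrix (Fin N) (Fin N) ℂ))) := by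
  intro B hB
  have h := (Complex.nonneg_iff.1 hB.trace_nonneg).1
  simp [Matrix.trace_smul]
  positivity

@[fun_prop]
lemma measurable_char {α : Type*} [MeasurableSpace α] {B X : α → Matrix (Fin N) (Fin N) ℂ}
    (hB : Measurable B) (hX : Measurable X) : Measurable fun s => char (B s) (X s) := by
  have hB' : ∀ i j, Measurable fun s => B s i j := fun i j =>
    (measurable_pi_apply j).comp ((measurable_pi_apply i).comp hB)
  have hX' : ∀ i j, Measurable fun s => X s i j := fun i j =>
    (measurable_pi_apply j).comp ((measurable_pi_apply i).comp hX)
  unfold char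
  simp only [Matrix.trace, Matrix.diag_apply, Matrix.mul_apply]
  fun_prop

/-! ### The multiplier algebra -/

/-- `f` is bounded and measurable along the random matrix `M`, and for the product of `f` with any
character of positive semidefinite frequency, averaging along `M` amounts to evaluation at the fixed
matrix `X₀`. -/
structure Good (P : Measure Ω) (M : Ω → Matrix (Fin N) (Fin N) ℂ)
    (X₀ : Matrix (Fin N) (Fin N) ℂ) (f : Matrix (Fin N) (Fin N) ℂ → ℂ) : Prop where
  meas : AEStronglyMeasurable (fun ω => f (M ω)) P
  bdd : ∃ C : ℝ, ∀ ω, ‖f (M ω)‖ ≤ C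
  eval : ∀ B : Matrix (Fin N) (Fin N) ℂ, B.PosSemidef →
    ∫ ω, f (M ω) * char B (M ω) ∂P = f X₀ * char B X₀

lemma Good.congr {P : Measure Ω} {M : Ω → Matrix (Fin N) (Fin N) ℂ}
    {X₀ : Matrix (Fin N) (Fin N) ℂ} {f g : Matrix (Fin N) (Fin N) ℂ → ℂ} (hf : Good P M X₀ f)
    (h : ∀ ω, f (M ω) = g (M ω)) (h₀ : f X₀ = g X₀) : Good P M X₀ g where
  meas := by simpa only [h] using hf.meas
  bdd := by simpa only [h] using hf.bdd
  eval := by simpa only [h, h₀] using hf.eval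

section Multipliers

variable {P : Measure Ω} [IsProbabilityMeasure P] {M : Ω → Matrix (Fin N) (Fin N) ℂ}
  {X₀ : Matrix (Fin N) (Fin N) ℂ}

lemma Good.integrable {f : Matrix (Fin N) (Fin N) ℂ → ℂ} (hf : Good P M X₀ f) :
    Integrable (fun ω => f (M ω)) P := by
  obtain ⟨C, hC⟩ := hf.bdd
  exact Integrable.of_bound hf.meas C (Eventually.of_forall hC)

lemma Good.integrable_mul_char {f : Matrix (Fin N) (Fin N) ℂ → ℂ} (hf : Good P M X₀ f)
    (hM : Measurable M) (hL : ∀ ω, Lower (M ω)) {B : Matrix (Fin N) (Fin N) ℂ}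
    (hB : B.PosSemidef) : Integrable (fun ω => f (M ω) * char B (M ω)) P :=
  hf.integrable.mul_bdd (c := 1)
    (by fun_prop : Measurable fun ω => char B (M ω)).aestronglyMeasurable
    (Eventually.of_forall fun ω => norm_char_le (hL ω) hB)

variable (P X₀) in
/-- The algebra of functions whose product with every `Good` function is again `Good`. -/
def multipliers (hM : Measurable M) (hL : ∀ ω, Lower (M ω)) :
    Subalgebra ℂ (Matrix (Fin N) (Fin N) ℂ → ℂ) where
  carrier := {g | ∀ f, Good P M X₀ f → Good P M X₀ (f * g)}
  mul_mem' {a b} ha hb f hf := by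
    rw [← mul_assoc]
    exact hb _ (ha _ hf)
  add_mem' {a b} ha hb f hf := by
    have h1 := ha f hf
    have h2 := hb f hf
    rw [mul_add]
    refine ⟨h1.meas.add h2.meas, ?_, fun B hB => ?_⟩
    · obtain ⟨C, hC⟩ := h1.bdd
      obtain ⟨D, hD⟩ := h2.bdd
      exact ⟨C + D, fun ω => (norm_add_le _ _).trans (add_le_add (hC ω) (hD ω))⟩
    · simp only [Pi.add_apply, add_mul]
      rw [integral_add (h1.integrable_mul_char hM hL hB) (h2.integrable_mul_char hM hL hB),
        h1.eval B hB, h2.eval B hB]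
  algebraMap_mem' r f hf := by
    refine ⟨hf.meas.mul_const r, ?_, fun B hB => ?_⟩
    · obtain ⟨C, hC⟩ := hf.bdd
      refine ⟨C * ‖r‖, fun ω => ?_⟩
      simp only [Pi.mul_apply, Pi.algebraMap_apply, Algebra.algebraMap_self, RingHom.id_apply,
        norm_mul]
      gcongr
      exact hC ω
    · simp only [Pi.mul_apply, Pi.algebraMap_apply, Algebra.algebraMap_self, RingHom.id_apply,
        mul_right_comm _ r]
      rw [integral_mul_const, hf.eval B hB]

variable {hM : Measurable M} {hL : ∀ ω, Lower (M ω)}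

/-- Membership in the multiplier algebra only depends on the values along `M` and at `X₀`, which
all lie in the lower half-plane. -/
lemma multipliers_congr {g h : Matrix (Fin N) (Fin N) ℂ → ℂ}
    (hg : g ∈ multipliers P X₀ hM hL) (hL₀ : Lower X₀) (hgh : ∀ X, Lower X → g X = h X) :
    h ∈ multipliers P X₀ hM hL := fun f hf =>
  (hg f hf).congr (fun ω => by simp [hgh _ (hL ω)]) (by simp [hgh _ hL₀])

/-- Superpositions of characters with positive semidefinite frequencies are multipliers. -/
lemma mem_multipliers_of_integral {α : Type*} [MeasurableSpace α] {μ : Measure α} [SFinite μ]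
    {k : α → ℂ} (hk : Integrable k μ) {B : α → Matrix (Fin N) (Fin N) ℂ} (hB : Measurable B)
    (hBpos : ∀ᵐ s ∂μ, (B s).PosSemidef) {g : Matrix (Fin N) (Fin N) ℂ → ℂ}
    (hg : ∀ ω, ∫ s, k s * char (B s) (M ω) ∂μ = g (M ω))
    (hg₀ : ∫ s, k s * char (B s) X₀ ∂μ = g X₀) :
    g ∈ multipliers P X₀ hM hL := by
  intro f hf
  obtain ⟨C, hC⟩ := hf.bdd
  have hkM : Integrable (fun p : Ω × α => f (M p.1) * k p.2 * char (B p.2) (M p.1))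
      (P.prod μ) := by
    refine (hf.integrable.mul_prod hk).mul_bdd (c := 1) ?_ ?_
    · exact (measurable_char (hB.comp measurable_snd)
        (hM.comp measurable_fst)).aestronglyMeasurable
    · have h2 : ∀ᵐ p ∂(P.prod μ), (B p.2).PosSemidef :=
        Measure.quasiMeasurePreserving_snd.ae hBpos
      filter_upwards [h2] with p hp using norm_char_le (hL p.1) hp
  have hfg : ∀ ω, ∫ s, f (M ω) * k s * char (B s) (M ω) ∂μ = f (M ω) * g (M ω) := by
    intro ω
    simp only [mul_assoc]
    rw [integral_const_mul, hg]
  refine ⟨?_, ⟨C * ∫ s, ‖k s‖ ∂μ, fun ω => ?_⟩, fun D hD => ?_⟩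
  · simp only [Pi.mul_apply, ← hfg]
    exact hkM.aestronglyMeasurable.integral_prod_right'
  · rw [Pi.mul_apply, norm_mul, ← hg]
    have h0 : 0 ≤ C := (norm_nonneg _).trans (hC ω)
    refine mul_le_mul (hC ω) ?_ (norm_nonneg _) h0
    refine norm_integral_le_of_norm_le hk.norm ?_
    filter_upwards [hBpos] with s hs
    rw [norm_mul]
    exact mul_le_of_le_one_right (norm_nonneg _) (norm_char_le (hL ω) hs)
  · have hswap : Integrable (Function.uncurry fun (ω : Ω) (s : α) =>
        f (M ω) * k s * char (B s) (M ω) * char D (M ω)) (P.prod μ) := by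
      refine hkM.mul_bdd (c := 1) ?_ ?_
      · exact (measurable_char measurable_const
          (hM.comp measurable_fst)).aestronglyMeasurable
      · exact Eventually.of_forall fun p => norm_char_le (hL p.1) hD
    simp only [Pi.mul_apply]
    calc ∫ ω, f (M ω) * g (M ω) * char D (M ω) ∂P
        = ∫ ω, ∫ s, f (M ω) * k s * char (B s) (M ω) * char D (M ω) ∂μ ∂P := by
          simp only [integral_mul_const, hfg]
      _ = ∫ s, ∫ ω, f (M ω) * k s * char (B s) (M ω) * char D (M ω) ∂P ∂μ :=
          integral_integral_swap hswap
      _ = ∫ s, k s * char (B s) X₀ * (f X₀ * char D X₀) ∂μ := by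
          refine integral_congr_ae ?_
          filter_upwards [hBpos] with s hs
          have := hf.eval (B s + D) (hs.add hD)
          simp only [char_add] at this
          calc _ = ∫ ω, k s * (f (M ω) * (char (B s) (M ω) * char D (M ω))) ∂P := by
                congr 1 with ω; ring
            _ = _ := by rw [integral_const_mul, this]; ring
      _ = f X₀ * g X₀ * char D X₀ := by
          rw [integral_mul_const, hg₀]; ring

end Multipliers

/-! ### Regularization of polynomials -/

/-- Given a subalgebra `S` and a sequence `ρ` in it, the elements that some fixed power of every
`ρ n` brings into `S`; the power does not depend on `n`. -/
def regularizable {R : Type*} [CommRing R] [Algebra ℂ R] (S : Subalgebra ℂ R) (ρ : ℕ → R)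
    (hρ : ∀ n, ρ n ∈ S) : Subalgebra ℂ R where
  carrier := {p | ∃ m : ℕ, ∀ n, p * ρ n ^ m ∈ S}
  mul_mem' := by
    rintro a b ⟨m, hm⟩ ⟨l, hl⟩
    refine ⟨m + l, fun n => ?_⟩
    convert S.mul_mem (hm n) (hl n) using 1
    ring
  add_mem' := by
    rintro a b ⟨m, hm⟩ ⟨l, hl⟩
    refine ⟨m + l, fun n => ?_⟩
    convert S.add_mem (S.mul_mem (hm n) (S.pow_mem (hρ n) l))
      (S.mul_mem (hl n) (S.pow_mem (hρ n) m)) using 1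
    ring
  algebraMap_mem' r := ⟨0, fun n => by simp⟩

/-- The adjugate of a matrix with entries in a subalgebra has entries in that subalgebra. -/
lemma adjugate_mem {R : Type*} [CommRing R] [Algebra ℂ R] (T : Subalgebra ℂ R)
    (Y : Matrix (Fin N) (Fin N) R) (hY : ∀ i j, Y i j ∈ T) (a b : Fin N) :
    Y.adjugate a b ∈ T := by
  let Y' : Matrix (Fin N) (Fin N) T := Matrix.of fun i j => ⟨Y i j, hY i j⟩
  have h : T.val.mapMatrix Y' = Y := by ext i j; rfl
  rw [← h, ← AlgHom.map_adjugate]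
  exact (Y'.adjugate a b).2


/-! ### Resolvents of Hermitian matrices and Gaussian integrals -/

lemma trace_vecMulVec_star_mul (v : Fin N → ℂ) (X : Matrix (Fin N) (Fin N) ℂ) :
    (vecMulVec v (star v) * X).trace = star v ⬝ᵥ X *ᵥ v := by
  rw [Matrix.vecMulVec_mul, Matrix.trace_vecMulVec, dotProduct_comm, ← Matrix.dotProduct_mulVec]

lemma det_smul_one_sub {H : Matrix (Fin N) (Fin N) ℂ} (hH : H.IsHermitian) (z : ℂ) :
    (z • (1 : Matrix (Fin N) (Fin N) ℂ) - H).det = ∏ i, (z - hH.eigenvalues i) := by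
  have h := Matrix.eval_charpoly H z
  rw [hH.charpoly_eq, Polynomial.eval_prod] at h
  rw [Matrix.smul_one_eq_diagonal, ← Matrix.scalar_apply]
  simpa using h.symm

lemma isUnit_smul_one_sub {H : Matrix (Fin N) (Fin N) ℂ} (hH : H.IsHermitian) {z : ℂ}
    (hz : 0 < z.im) : IsUnit (z • (1 : Matrix (Fin N) (Fin N) ℂ) - H) := by
  rw [Matrix.isUnit_iff_isUnit_det, det_smul_one_sub hH, isUnit_iff_ne_zero,
    Finset.prod_ne_zero_iff]
  intro i _ h
  have := congrArg Complex.im h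
  simp at this
  exact hz.ne' this

/-- Every entry of the resolvent of a Hermitian matrix is at most `1 / Im z`. For a column `u` of
the resolvent, `Im z * ‖u‖²` is the imaginary part of the conjugate of `u b`. -/
lemma norm_resolvent_le {H : Matrix (Fin N) (Fin N) ℂ} (hH : H.IsHermitian) {z : ℂ}
    (hz : 0 < z.im) (a b : Fin N) :
    ‖(z • (1 : Matrix (Fin N) (Fin N) ℂ) - H)⁻¹ a b‖ ≤ 1 / z.im := by
  set K := z • (1 : Matrix (Fin N) (Fin N) ℂ) - H with hK
  have hu : IsUnit K.det := (Matrix.isUnit_iff_isUnit_det _).1 (isUnit_smul_one_sub hH hz)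
  set u : Fin N → ℂ := fun i => K⁻¹ i b with hu_def
  have h1 : K *ᵥ u = Pi.single b 1 := by
    have h : u = K⁻¹ *ᵥ Pi.single b 1 := by
      ext i; simp [hu_def, Matrix.mulVec_single]
    rw [h, Matrix.mulVec_mulVec, Matrix.mul_nonsing_inv _ hu, Matrix.one_mulVec]
  have h2 : star u ⬝ᵥ K *ᵥ u = star (u b) := by rw [h1]; simp
  have h3 : (star u ⬝ᵥ H *ᵥ u).im = 0 := by
    rw [← trace_vecMulVec_star_mul]
    exact im_trace_mul_eq_zero (posSemidef_vecMulVec_self_star u).isHermitian hH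
  have h4 : (star u ⬝ᵥ u) = ((∑ i, ‖u i‖ ^ 2 : ℝ) : ℂ) := by
    simp [dotProduct, Complex.conj_mul']
  have h5 : z.im * ∑ i, ‖u i‖ ^ 2 ≤ ‖u b‖ := by
    have h := congrArg Complex.im h2
    rw [hK, Matrix.sub_mulVec, Matrix.smul_mulVec, Matrix.one_mulVec, dotProduct_sub,
      dotProduct_smul, h4, Complex.sub_im, h3, smul_eq_mul, Complex.im_mul_ofReal, sub_zero] at h
    rw [h, ← norm_star]
    exact (le_abs_self _).trans (Complex.abs_im_le_norm _)
  have h6 : ∀ c, z.im * ‖u c‖ ^ 2 ≤ ‖u b‖ := fun c => le_trans (by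
    gcongr
    exact Finset.single_le_sum (f := fun i => ‖u i‖ ^ 2) (fun i _ => by positivity)
      (Finset.mem_univ c)) h5
  have h7 : z.im * ‖u b‖ ≤ 1 := by
    by_contra! h
    have h8 : 0 < ‖u b‖ := by
      by_contra! h9
      nlinarith
    nlinarith [h6 b]
  have h8 : z.im * ‖u a‖ ≤ 1 := by
    have h9 : (z.im * ‖u a‖) ^ 2 ≤ 1 := by nlinarith [h6 a]
    exact (abs_le_one_iff_mul_self_le_one.2 (by nlinarith) |> le_trans (le_abs_self _))
  rw [le_div_iff₀ hz, mul_comm]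
  exact h8

lemma re_neg_I_mul (w : ℂ) : (-Complex.I * w).re = w.im := by simp

/-- Complex Gaussian integral on `ℂ`. -/
lemma integral_gauss_one {w : ℂ} (hw : 0 < w.im) :
    ∫ x : ℂ, Complex.exp (Complex.I * (w * (‖x‖ : ℂ) ^ 2)) = Real.pi * Complex.I * w⁻¹ := by
  have h := GaussianFourier.integral_cexp_neg_mul_sq_norm (V := ℂ) (b := -Complex.I * w)
    (by rwa [re_neg_I_mul])
  rw [Complex.finrank_real_complex] at h
  have h0 : w ≠ 0 := by rintro rfl; simp at hw
  calc _ = ∫ x : ℂ, Complex.exp (-(-Complex.I * w) * (‖x‖ : ℂ) ^ 2) := by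
        congr 1 with x; ring_nf
    _ = _ := by
        rw [h]
        norm_num
        field_simp
        simp

lemma integrable_gauss_one {w : ℂ} (hw : 0 < w.im) :
    Integrable fun x : ℂ => Complex.exp (Complex.I * (w * (‖x‖ : ℂ) ^ 2)) := by
  have h := GaussianFourier.integrable_cexp_neg_mul_sq_norm_add (V := ℂ) (b := -Complex.I * w)
    (by rwa [re_neg_I_mul]) 0 0
  refine h.congr (Eventually.of_forall fun x => ?_)
  dsimp only
  congr 1
  ring

/-- Unitary matrices preserve Lebesgue measure on `ℂ^N`. -/
lemma measurePreserving_unitary (V : Matrix.unitaryGroup (Fin N) ℂ) :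
    MeasurePreserving (fun x : Fin N → ℂ => (V : Matrix (Fin N) (Fin N) ℂ) *ᵥ x) volume
      volume := by
  set f : (Fin N → ℂ) →ₗ[ℝ] (Fin N → ℂ) :=
    (Matrix.toLin' (V : Matrix (Fin N) (Fin N) ℂ)).restrictScalars ℝ with hf
  have hdet : LinearMap.det f = 1 := by
    rw [hf, LinearMap.det_restrictScalars, LinearMap.det_toLin', Algebra.norm_complex_apply,
      Complex.normSq_eq_norm_sq]
    have h := (Matrix.det_of_mem_unitary V.2)
    rw [CStarRing.norm_of_mem_unitary h]
    norm_num
  have h := Measure.map_linearMap_addHaar_eq_smul_addHaar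
    (volume : Measure (Fin N → ℂ)) (f := f) (by rw [hdet]; exact one_ne_zero)
  rw [hdet] at h
  refine ⟨?_, ?_⟩
  · exact f.continuous_of_finiteDimensional.measurable
  · have hfun : ⇑f = fun x : Fin N → ℂ => (V : Matrix (Fin N) (Fin N) ℂ) *ᵥ x := rfl
    simpa [hfun] using h

/-- The complex Gaussian integral produces the reciprocal of the determinant; after a unitary change
of variables it is a product of one-dimensional integrals. -/
lemma integral_gauss {H : Matrix (Fin N) (Fin N) ℂ} (hH : H.IsHermitian) {z : ℂ}
    (hz : 0 < z.im) :
    ∫ x : Fin N → ℂ, Complex.exp (Complex.I *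
      (star x ⬝ᵥ (z • (1 : Matrix (Fin N) (Fin N) ℂ) - H) *ᵥ x)) =
      (Real.pi * Complex.I) ^ N * (z • (1 : Matrix (Fin N) (Fin N) ℂ) - H).det⁻¹ := by
  set V := hH.eigenvectorUnitary with hV
  have hVV : star (V : Matrix (Fin N) (Fin N) ℂ) * (V : Matrix (Fin N) (Fin N) ℂ) = 1 :=
    Unitary.coe_star_mul_self V
  have hdiag : star (V : Matrix (Fin N) (Fin N) ℂ) *
      (z • (1 : Matrix (Fin N) (Fin N) ℂ) - H) * (V : Matrix (Fin N) (Fin N) ℂ) =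
      diagonal fun i => z - hH.eigenvalues i := by
    have h : star (V : Matrix (Fin N) (Fin N) ℂ) * H * (V : Matrix (Fin N) (Fin N) ℂ) =
        diagonal (RCLike.ofReal ∘ hH.eigenvalues) := by
      conv_lhs => rw [hH.spectral_theorem, Unitary.conjStarAlgAut_apply]
      simp only [← hV, ← mul_assoc, hVV, one_mul]
      rw [mul_assoc, hVV, mul_one]
    rw [mul_sub, sub_mul, h, mul_smul_comm, smul_mul_assoc, mul_one, hVV,
      Matrix.smul_one_eq_diagonal, Matrix.diagonal_sub]
    rfl
  have hcov : MeasurableEmbedding fun x : Fin N → ℂ => (V : Matrix (Fin N) (Fin N) ℂ) *ᵥ x := by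
    refine (Continuous.measurableEmbedding (by fun_prop) ?_)
    intro x y hxy
    have := congrArg (fun v => star (V : Matrix (Fin N) (Fin N) ℂ) *ᵥ v) hxy
    simpa [Matrix.mulVec_mulVec, hVV] using this
  rw [← (measurePreserving_unitary V).integral_comp hcov]
  have hform : ∀ x : Fin N → ℂ, star ((V : Matrix (Fin N) (Fin N) ℂ) *ᵥ x) ⬝ᵥ
      (z • (1 : Matrix (Fin N) (Fin N) ℂ) - H) *ᵥ ((V : Matrix (Fin N) (Fin N) ℂ) *ᵥ x) =
      ∑ i, (z - hH.eigenvalues i) * (‖x i‖ : ℂ) ^ 2 := by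
    intro x
    rw [Matrix.star_mulVec, ← Matrix.dotProduct_mulVec, Matrix.mulVec_mulVec, Matrix.mulVec_mulVec,
      ← Matrix.star_eq_conjTranspose, hdiag]
    simp only [dotProduct, Matrix.mulVec_diagonal, Pi.star_apply]
    refine Finset.sum_congr rfl fun i _ => ?_
    rw [← Complex.conj_mul']
    simp only [RCLike.star_def]
    ring
  simp only [hform, Finset.mul_sum, Complex.exp_sum]
  rw [integral_fintype_prod_volume_eq_prod
    fun i (x : ℂ) => Complex.exp (Complex.I * ((z - hH.eigenvalues i) * (‖x‖ : ℂ) ^ 2))]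
  rw [det_smul_one_sub hH, ← Finset.prod_inv_distrib]
  rw [Finset.prod_congr rfl fun i _ => integral_gauss_one (w := z - hH.eigenvalues i) (by simpa)]
  rw [Finset.prod_mul_distrib]
  simp

lemma integrable_gauss {H : Matrix (Fin N) (Fin N) ℂ} (hH : H.IsHermitian) {z : ℂ}
    (hz : 0 < z.im) :
    Integrable fun x : Fin N → ℂ => Complex.exp (Complex.I *
      (star x ⬝ᵥ (z • (1 : Matrix (Fin N) (Fin N) ℂ) - H) *ᵥ x)) := by
  have h := (Integrable.fintype_prod (ι := Fin N) (μ := fun _ => (volume : Measure ℂ))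
    fun _ => integrable_gauss_one (w := z) hz)
  rw [← volume_pi] at h
  refine h.mono (by fun_prop) (Eventually.of_forall fun x => le_of_eq ?_)
  rw [← Complex.exp_sum, Complex.norm_exp, Complex.norm_exp]
  congr 1
  have h3 : (star x ⬝ᵥ H *ᵥ x).im = 0 := by
    rw [← trace_vecMulVec_star_mul]
    exact im_trace_mul_eq_zero (posSemidef_vecMulVec_self_star x).isHermitian hH
  have h4 : (star x ⬝ᵥ x) = ∑ i, (‖x i‖ : ℂ) ^ 2 := by
    simp [dotProduct, Complex.conj_mul']
  rw [Matrix.sub_mulVec, Matrix.smul_mulVec, Matrix.one_mulVec, dotProduct_sub, dotProduct_smul,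
    h4, mul_sub, Complex.sub_re, ← Finset.mul_sum, ← Finset.mul_sum, smul_eq_mul]
  simp [h3]

/-! ### Damped linear forms -/

/-- A scalar resolvent `w / (w - Tr (B X))` with `w = i (n + 1)`; as `n` grows it tends to `1`. -/
def damping (B : Matrix (Fin N) (Fin N) ℂ) (n : ℕ) (X : Matrix (Fin N) (Fin N) ℂ) : ℂ :=
  ((n + 1 : ℝ) * Complex.I) / ((n + 1 : ℝ) * Complex.I - (B * X).trace)

lemma le_norm_damping_denom {B X : Matrix (Fin N) (Fin N) ℂ} (hB : B.PosSemidef) (hX : Lower X)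
    (n : ℕ) : (n + 1 : ℝ) ≤ ‖((n + 1 : ℝ) * Complex.I - (B * X).trace : ℂ)‖ := by
  refine le_trans ?_ (Complex.im_le_norm _)
  have := hX B hB
  simp
  linarith

lemma damping_denom_ne_zero {B X : Matrix (Fin N) (Fin N) ℂ} (hB : B.PosSemidef) (hX : Lower X)
    (n : ℕ) : ((n + 1 : ℝ) * Complex.I - (B * X).trace : ℂ) ≠ 0 := by
  have := le_norm_damping_denom hB hX n
  exact norm_pos_iff.1 (lt_of_lt_of_le (by positivity) this)

lemma norm_damping_le {B X : Matrix (Fin N) (Fin N) ℂ} (hB : B.PosSemidef) (hX : Lower X)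
    (n : ℕ) : ‖damping B n X‖ ≤ 1 := by
  rw [damping, norm_div]
  refine div_le_one_of_le₀ ?_ (norm_nonneg _)
  refine le_trans (le_of_eq ?_) (le_norm_damping_denom hB hX n)
  rw [norm_mul, Complex.norm_I, mul_one, Complex.norm_real, Real.norm_of_nonneg (by positivity)]

lemma tendsto_damping (B X : Matrix (Fin N) (Fin N) ℂ) :
    Tendsto (fun n => damping B n X) atTop (𝓝 1) := by
  have h1 : Tendsto (fun n : ℕ => (((1 / ((n : ℝ) + 1) : ℝ)) : ℂ)) atTop (𝓝 ((0 : ℝ) : ℂ)) :=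
    (Complex.continuous_ofReal.tendsto _).comp tendsto_one_div_add_atTop_nhds_zero_nat
  have h2 : Tendsto (fun n : ℕ => (1 + Complex.I * (B * X).trace *
      (((1 / ((n : ℝ) + 1) : ℝ)) : ℂ))⁻¹) atTop (𝓝 (1 : ℂ)) := by
    have h3 := ((h1.const_mul (Complex.I * (B * X).trace)).const_add 1).inv₀ (by simp)
    simpa using h3
  refine h2.congr fun n => ?_
  have hw : (((n + 1 : ℝ) : ℂ) * Complex.I) ≠ 0 :=
    mul_ne_zero (by exact_mod_cast (by positivity : (n + 1 : ℝ) ≠ 0)) Complex.I_ne_zero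
  have h0 : ((n + 1 : ℝ) : ℂ) ≠ 0 := left_ne_zero_of_mul hw
  have h4 : 1 + Complex.I * (B * X).trace * (((1 / ((n : ℝ) + 1) : ℝ)) : ℂ) =
      ((n + 1 : ℝ) * Complex.I - (B * X).trace) / ((n + 1 : ℝ) * Complex.I) := by
    rw [eq_div_iff hw, Complex.ofReal_div, Complex.ofReal_one]
    field_simp
    linear_combination (B * X).trace * Complex.I_sq
  rw [h4, inv_div, damping]

section Damping

variable {P : Measure Ω} [IsProbabilityMeasure P] {M : Ω → Matrix (Fin N) (Fin N) ℂ}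
  {X₀ : Matrix (Fin N) (Fin N) ℂ} {hM : Measurable M} {hL : ∀ ω, Lower (M ω)}

/-- The scalar resolvent is the one-sided Laplace transform `-i w ∫₀^∞ exp (i s (w - Tr (B X))) ds`,
hence a superposition of characters with frequencies `s • B`. -/
lemma damping_mem {B : Matrix (Fin N) (Fin N) ℂ} (hB : B.PosSemidef) (hL₀ : Lower X₀) (n : ℕ) :
    damping B n ∈ multipliers P X₀ hM hL := by
  set w : ℂ := (n + 1 : ℝ) * Complex.I with hw
  have hwim : 0 < w.im := by simp [hw]; positivity
  have key : ∀ X, Lower X →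
      ∫ s in Set.Ioi (0 : ℝ), (-Complex.I * w * Complex.exp (Complex.I * w * s)) *
        char ((s : ℂ) • B) X = damping B n X := by
    intro X hX
    have h0 := damping_denom_ne_zero hB hX n
    have hre : (Complex.I * (w - (B * X).trace)).re < 0 := by
      have := hX B hB
      simp
      linarith
    calc _ = ∫ s in Set.Ioi (0 : ℝ), (-Complex.I * w) *
          Complex.exp (Complex.I * (w - (B * X).trace) * s) := by
          congr 1 with s
          rw [char, mul_assoc, ← Complex.exp_add, Matrix.smul_mul, Matrix.trace_smul]
          congr 2
          simp only [smul_eq_mul]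
          ring
      _ = _ := by
          rw [integral_const_mul, integral_exp_mul_complex_Ioi hre, damping, ← hw]
          have h1 : w - (B * X).trace ≠ 0 := h0
          simp only [Complex.ofReal_zero, mul_zero, Complex.exp_zero]
          field_simp [Complex.I_ne_zero]
  refine mem_multipliers_of_integral (μ := volume.restrict (Set.Ioi (0 : ℝ)))
    (k := fun s => -Complex.I * w * Complex.exp (Complex.I * w * s)) (B := fun s => (s : ℂ) • B)
    ?_ ?_ ?_ (fun ω => key _ (hL ω)) (key _ hL₀)
  · exact (integrableOn_exp_mul_complex_Ioi (a := Complex.I * w) (by simpa using hwim) 0).const_mul _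
  · refine measurable_pi_lambda _ fun i => measurable_pi_lambda _ fun j => ?_
    simp only [Matrix.smul_apply]
    fun_prop
  · refine (ae_restrict_mem measurableSet_Ioi).mono fun s hs => hB.smul ?_
    exact_mod_cast (le_of_lt hs : (0 : ℝ) ≤ s)

/-- The linear form `Tr (B X)` is unbounded, but becomes a multiplier after damping, because
`x * (w / (w - x)) = w * (w / (w - x) - 1)`. -/
lemma trace_mul_damping_mem {B : Matrix (Fin N) (Fin N) ℂ} (hB : B.PosSemidef) (hL₀ : Lower X₀)
    (n : ℕ) : (fun X => (B * X).trace) * damping B n ∈ multipliers P X₀ hM hL := by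
  have h := (multipliers P X₀ hM hL).smul_mem
    ((multipliers P X₀ hM hL).sub_mem (damping_mem hB hL₀ n) (multipliers P X₀ hM hL).one_mem)
    ((n + 1 : ℝ) * Complex.I)
  refine multipliers_congr h hL₀ fun X hX => ?_
  have h0 := damping_denom_ne_zero hB hX n
  simp only [Pi.smul_apply, Pi.sub_apply, Pi.one_apply, Pi.mul_apply, damping, smul_eq_mul]
  field_simp
  ring

/-- The rank-one frequency `v v*` with `v = e_a + i^k e_b`. By polarization these matrices span all
matrices. -/
def freq (j : Fin N × Fin N × Fin 4) : Matrix (Fin N) (Fin N) ℂ :=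
  vecMulVec (Pi.single j.1 1 + Complex.I ^ (j.2.2 : ℕ) • Pi.single j.2.1 1)
    (star (Pi.single j.1 1 + Complex.I ^ (j.2.2 : ℕ) • Pi.single j.2.1 1))

lemma posSemidef_freq (j : Fin N × Fin N × Fin 4) : (freq j).PosSemidef :=
  posSemidef_vecMulVec_self_star _

lemma trace_freq_mul (j : Fin N × Fin N × Fin 4) (X : Matrix (Fin N) (Fin N) ℂ) :
    (freq j * X).trace = X j.1 j.1 + Complex.I ^ (j.2.2 : ℕ) * X j.1 j.2.1 +
      star (Complex.I ^ (j.2.2 : ℕ)) *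
        (X j.2.1 j.1 + Complex.I ^ (j.2.2 : ℕ) * X j.2.1 j.2.1) := by
  rw [freq, trace_vecMulVec_star_mul]
  simp only [Matrix.mulVec_add, Matrix.mulVec_smul, star_add, star_smul, add_dotProduct,
    dotProduct_add, smul_dotProduct, dotProduct_smul, ← Pi.single_star, star_one,
    single_dotProduct, Matrix.mulVec_single_one, Matrix.col_apply, smul_eq_mul, one_mul]
  ring

lemma apply_eq_sum_freq (a b : Fin N) (X : Matrix (Fin N) (Fin N) ℂ) :
    X b a = (1 / 4 : ℂ) * ∑ k : Fin 4, Complex.I ^ (k : ℕ) * (freq (a, b, k) * X).trace := by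
  have h2 : Complex.I ^ 2 = -1 := Complex.I_sq
  have h3 : Complex.I ^ 3 = -Complex.I := Complex.I_pow_three
  simp only [trace_freq_mul, Fin.sum_univ_four]
  simp [h2, h3]
  ring_nf
  simp [h2]
  ring

/-- The product of the dampings over the spanning family of frequencies. It is bounded by `1` on the
lower half-plane and tends to `1` as `n` grows. -/
def regularizer (N n : ℕ) : Matrix (Fin N) (Fin N) ℂ → ℂ :=
  ∏ j : Fin N × Fin N × Fin 4, damping (freq j) n

lemma regularizer_mem (hL₀ : Lower X₀) (n : ℕ) :
    regularizer N n ∈ multipliers P X₀ hM hL :=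
  Subalgebra.prod_mem _ fun j _ => damping_mem (posSemidef_freq j) hL₀ n

lemma norm_regularizer_le {X : Matrix (Fin N) (Fin N) ℂ} (hX : Lower X) (n : ℕ) :
    ‖regularizer N n X‖ ≤ 1 := by
  rw [regularizer, Finset.prod_apply, norm_prod]
  exact Finset.prod_le_one (fun _ _ => norm_nonneg _)
    fun j _ => norm_damping_le (posSemidef_freq j) hX n

lemma tendsto_regularizer (X : Matrix (Fin N) (Fin N) ℂ) :
    Tendsto (fun n => regularizer N n X) atTop (𝓝 1) := by
  simp only [regularizer, Finset.prod_apply]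
  simpa using tendsto_finsetProd (Finset.univ : Finset (Fin N × Fin N × Fin 4))
    fun j _ => tendsto_damping (freq j) X

/-- Every matrix entry is a combination of the linear forms `Tr (freq j * X)`, and one factor of the
regularizer damps each of these forms. -/
lemma entry_mem_regularizable (hL₀ : Lower X₀) (a b : Fin N) :
    (fun X : Matrix (Fin N) (Fin N) ℂ => X b a) ∈
      regularizable (multipliers P X₀ hM hL) (regularizer N) (regularizer_mem hL₀) := by
  have hform : ∀ j : Fin N × Fin N × Fin 4, (fun X => (freq j * X).trace) ∈
      regularizable (multipliers P X₀ hM hL) (regularizer N) (regularizer_mem hL₀) := by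
    refine fun j => ⟨1, fun n => ?_⟩
    rw [pow_one, regularizer, ← Finset.mul_prod_erase _ _ (Finset.mem_univ j), ← mul_assoc]
    exact Subalgebra.mul_mem _ (trace_mul_damping_mem (posSemidef_freq j) hL₀ n)
      (Subalgebra.prod_mem _ fun i _ => damping_mem (posSemidef_freq i) hL₀ n)
  have h : (fun X : Matrix (Fin N) (Fin N) ℂ => X b a) = (1 / 4 : ℂ) • ∑ k : Fin 4,
      Complex.I ^ (k : ℕ) • fun X => (freq (a, b, k) * X).trace := by
    ext X
    simpa using apply_eq_sum_freq a b X
  rw [h]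
  exact Subalgebra.smul_mem _ (Subalgebra.sum_mem _ fun k _ => Subalgebra.smul_mem _ (hform _) _) _

end Damping

/-! ### The mean of the resolvent -/

lemma good_one {P : Measure Ω} {M : Ω → Matrix (Fin N) (Fin N) ℂ}
    {X₀ : Matrix (Fin N) (Fin N) ℂ}
    (hchar : ∀ B : Matrix (Fin N) (Fin N) ℂ, B.PosSemidef → ∫ ω, char B (M ω) ∂P = char B X₀) :
    Good P M X₀ 1 where
  meas := aestronglyMeasurable_const
  bdd := ⟨1, fun ω => by simp⟩
  eval B hB := by simpa using hchar B hB

section Resolvent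

variable {P : Measure Ω} [IsProbabilityMeasure P] {M : Ω → Matrix (Fin N) (Fin N) ℂ}

lemma smul_one_sub_sub_scalar (A : Matrix (Fin N) (Fin N) ℂ) (z : ℂ) (t : ℝ) :
    z • (1 : Matrix (Fin N) (Fin N) ℂ) - A - -((Complex.I * t) • 1) =
      (z + Complex.I * t) • 1 - A := by
  rw [add_smul]
  abel

/-- By the Gaussian integral, `det (z - A - X)⁻¹` is a superposition of characters with the rank-one
frequencies `x x*`, so it is a multiplier. -/
lemma inv_det_mem {A : Matrix (Fin N) (Fin N) ℂ} (hA : A.IsHermitian) {z : ℂ} (hz : 0 < z.im)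
    {t : ℝ} (ht : 0 < t) (hM : Measurable M) (hH : ∀ ω, (M ω).IsHermitian) :
    (fun X => (z • (1 : Matrix (Fin N) (Fin N) ℂ) - A - X).det⁻¹) ∈
      multipliers P (-((Complex.I * t) • (1 : Matrix (Fin N) (Fin N) ℂ))) hM
        (fun ω => lower_of_isHermitian (hH ω)) := by
  have hc : ((Real.pi : ℂ) * Complex.I) ^ N ≠ 0 :=
    pow_ne_zero _ (mul_ne_zero (by exact_mod_cast Real.pi_ne_zero) Complex.I_ne_zero)
  have hmul : ∀ (X : Matrix (Fin N) (Fin N) ℂ) (x : Fin N → ℂ),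
      Complex.exp (Complex.I * (star x ⬝ᵥ (z • (1 : Matrix (Fin N) (Fin N) ℂ) - A) *ᵥ x)) *
        char (vecMulVec x (star x)) X =
      Complex.exp (Complex.I * (star x ⬝ᵥ (z • (1 : Matrix (Fin N) (Fin N) ℂ) - A - X) *ᵥ x)) := by
    intro X x
    rw [char, ← Complex.exp_add, trace_vecMulVec_star_mul, Matrix.sub_mulVec _ X, dotProduct_sub]
    congr 1
    ring
  have h : (fun X => ((Real.pi : ℂ) * Complex.I) ^ N *
      (z • (1 : Matrix (Fin N) (Fin N) ℂ) - A - X).det⁻¹) ∈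
      multipliers P (-((Complex.I * t) • (1 : Matrix (Fin N) (Fin N) ℂ))) hM
        (fun ω => lower_of_isHermitian (hH ω)) := by
    refine mem_multipliers_of_integral (integrable_gauss hA hz)
      (B := fun x => vecMulVec x (star x)) ?_
      (Eventually.of_forall fun x => posSemidef_vecMulVec_self_star x) (fun ω => ?_) ?_
    · refine measurable_pi_lambda _ fun i => measurable_pi_lambda _ fun j => ?_
      simp only [Matrix.vecMulVec_apply, Pi.star_apply]
      fun_prop
    · simp only [hmul, sub_sub]
      exact integral_gauss (hA.add (hH ω)) hz
    · simp only [hmul, smul_one_sub_sub_scalar]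
      exact integral_gauss hA (by simpa using by positivity)
  convert Subalgebra.smul_mem _ h (((Real.pi : ℂ) * Complex.I) ^ N)⁻¹ using 1
  ext X
  rw [Pi.smul_apply, smul_eq_mul, inv_mul_cancel_left₀ hc]

lemma measurable_resolvent {Y : Ω → Matrix (Fin N) (Fin N) ℂ} (hY : Measurable Y) (a b : Fin N) :
    Measurable fun ω => (Y ω)⁻¹ a b := by
  have hY' : ∀ i j, Measurable fun ω => Y ω i j := fun i j =>
    (measurable_pi_apply j).comp ((measurable_pi_apply i).comp hY)
  have hdet : ∀ Z : Ω → Matrix (Fin N) (Fin N) ℂ, (∀ i j, Measurable fun ω => Z ω i j) →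
      Measurable fun ω => (Z ω).det := fun Z hZ => by
    simp only [Matrix.det_apply]
    fun_prop
  simp only [Matrix.inv_def, Matrix.smul_apply, Ring.inverse_eq_inv', smul_eq_mul,
    Matrix.adjugate_apply]
  refine (hdet Y hY').inv.mul (hdet _ fun i j => ?_)
  simp only [Matrix.updateRow_apply]
  split_ifs <;> fun_prop

/-- The entries of the resolvent, damped by a fixed power of the regularizers, are multipliers:
each is the product of the reciprocal determinant with a polynomial in the entries. -/
lemma exists_resolvent_mul_mem {A : Matrix (Fin N) (Fin N) ℂ} (hA : A.IsHermitian) {z : ℂ}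
    (hz : 0 < z.im) {t : ℝ} (ht : 0 < t) (hM : Measurable M) (hH : ∀ ω, (M ω).IsHermitian)
    (a b : Fin N) :
    ∃ m : ℕ, ∀ n, (fun X => (z • (1 : Matrix (Fin N) (Fin N) ℂ) - A - X)⁻¹ a b) *
      regularizer N n ^ m ∈
      multipliers P (-((Complex.I * t) • (1 : Matrix (Fin N) (Fin N) ℂ))) hM
        (fun ω => lower_of_isHermitian (hH ω)) := by
  let Y : Matrix (Fin N) (Fin N) (Matrix (Fin N) (Fin N) ℂ → ℂ) :=
    Matrix.of fun i j X => (z • (1 : Matrix (Fin N) (Fin N) ℂ) - A - X) i j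
  have hY : ∀ i j, Y i j ∈ regularizable (multipliers P _ hM
      (fun ω => lower_of_isHermitian (hH ω))) (regularizer N) (regularizer_mem (lower_scalar ht)) :=
    fun i j => Subalgebra.sub_mem _
      (Subalgebra.algebraMap_mem _ ((z • (1 : Matrix (Fin N) (Fin N) ℂ) - A) i j))
      (entry_mem_regularizable (lower_scalar ht) j i)
  obtain ⟨m, hm⟩ := adjugate_mem _ Y hY a b
  refine ⟨m, fun n => ?_⟩
  have hadj : ∀ X, Y.adjugate a b X =
      (z • (1 : Matrix (Fin N) (Fin N) ℂ) - A - X).adjugate a b := fun X =>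
    congrFun (congrFun (RingHom.map_adjugate
      (Pi.evalRingHom (fun _ : Matrix (Fin N) (Fin N) ℂ => ℂ) X) Y) a) b
  convert Subalgebra.mul_mem _ (inv_det_mem hA hz ht hM hH) (hm n) using 1
  ext X
  simp only [Pi.mul_apply, hadj, Matrix.inv_def, Ring.inverse_eq_inv', Matrix.smul_apply,
    smul_eq_mul]
  ring

/-- If the mean of every character with positive semidefinite frequency is its value at `-it`, then
the same holds for the resolvent. -/
theorem integral_resolvent {A : Matrix (Fin N) (Fin N) ℂ} (hA : A.IsHermitian) {z : ℂ}
    (hz : 0 < z.im) {t : ℝ} (ht : 0 < t) (hM : Measurable M) (hH : ∀ ω, (M ω).IsHermitian)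
    (hchar : ∀ B : Matrix (Fin N) (Fin N) ℂ, B.PosSemidef →
      ∫ ω, char B (M ω) ∂P = char B (-((Complex.I * t) • 1))) (a b : Fin N) :
    Integrable (fun ω => (z • (1 : Matrix (Fin N) (Fin N) ℂ) - A - M ω)⁻¹ a b) P ∧
    ∫ ω, (z • (1 : Matrix (Fin N) (Fin N) ℂ) - A - M ω)⁻¹ a b ∂P =
      ((z + Complex.I * t) • (1 : Matrix (Fin N) (Fin N) ℂ) - A)⁻¹ a b := by
  obtain ⟨m, hm⟩ := exists_resolvent_mul_mem (P := P) hA hz ht hM hH a b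
  have hgood : ∀ n, Good P M (-((Complex.I * t) • (1 : Matrix (Fin N) (Fin N) ℂ)))
      ((fun X => (z • (1 : Matrix (Fin N) (Fin N) ℂ) - A - X)⁻¹ a b) * regularizer N n ^ m) :=
    fun n => by simpa only [one_mul] using hm n 1 (good_one hchar)
  have hbound : ∀ ω, ‖(z • (1 : Matrix (Fin N) (Fin N) ℂ) - A - M ω)⁻¹ a b‖ ≤ 1 / z.im :=
    fun ω => by
      rw [sub_sub]
      exact norm_resolvent_le (hA.add (hH ω)) hz a b
  have hmeas : Measurable fun ω => (z • (1 : Matrix (Fin N) (Fin N) ℂ) - A - M ω)⁻¹ a b := by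
    refine measurable_resolvent (measurable_pi_lambda _ fun i => measurable_pi_lambda _ fun j => ?_)
      a b
    exact measurable_const.sub ((measurable_pi_apply j).comp ((measurable_pi_apply i).comp hM))
  have hlim : ∀ X : Matrix (Fin N) (Fin N) ℂ, Tendsto
      (fun n => ((fun X => (z • (1 : Matrix (Fin N) (Fin N) ℂ) - A - X)⁻¹ a b) *
        regularizer N n ^ m) X) atTop
      (𝓝 ((z • (1 : Matrix (Fin N) (Fin N) ℂ) - A - X)⁻¹ a b)) := fun X => by
    simpa using ((tendsto_regularizer X).pow m).const_mul
      ((z • (1 : Matrix (Fin N) (Fin N) ℂ) - A - X)⁻¹ a b)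
  refine ⟨Integrable.of_bound hmeas.aestronglyMeasurable _ (Eventually.of_forall hbound), ?_⟩
  have h1 := tendsto_integral_of_dominated_convergence (fun _ => 1 / z.im)
    (fun n => (hgood n).meas) (integrable_const _)
    (fun n => Eventually.of_forall fun ω => by
      rw [Pi.mul_apply, Pi.pow_apply, norm_mul, norm_pow]
      exact (mul_le_of_le_one_right (norm_nonneg _) (pow_le_one₀ (norm_nonneg _)
        (norm_regularizer_le (lower_of_isHermitian (hH ω)) n))).trans (hbound ω))
    (Eventually.of_forall fun ω => hlim (M ω))
  have h2 : ∀ n, ∫ ω, ((fun X => (z • (1 : Matrix (Fin N) (Fin N) ℂ) - A - X)⁻¹ a b) *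
      regularizer N n ^ m) (M ω) ∂P = ((fun X => (z • (1 : Matrix (Fin N) (Fin N) ℂ) - A - X)⁻¹ a b) *
      regularizer N n ^ m) (-((Complex.I * t) • 1)) := fun n => by
    -- the constant function `1` is the character of frequency `0`
    simpa [char] using (hgood n).eval 0 .zero
  simp only [h2] at h1
  have h3 := tendsto_nhds_unique h1 (hlim _)
  rwa [smul_one_sub_sub_scalar] at h3

end Resolvent

/-! ### Mean of the characters -/

/-- For positive semidefinite `B` the form `U* B U` is nonnegative, so its absolute value has mean
`Tr (B E[U U*]) = Tr B`. -/
lemma integral_abs_form {P : Measure Ω} {U : Ω → Fin N → ℂ}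
    (hUint : ∀ a b : Fin N, Integrable (fun ω => U ω a * (starRingEnd ℂ) (U ω b)) P)
    (hUcov : ∀ a b : Fin N,
      ∫ ω, U ω a * (starRingEnd ℂ) (U ω b) ∂P = if a = b then 1 else 0)
    {B : Matrix (Fin N) (Fin N) ℂ} (hB : B.PosSemidef) :
    ((∫ ω, |(star (U ω) ⬝ᵥ (-B).mulVec (U ω)).re| ∂P : ℝ) : ℂ) = B.trace := by
  rw [← integral_complex_ofReal]
  have h : ∀ ω, ((|(star (U ω) ⬝ᵥ (-B).mulVec (U ω)).re| : ℝ) : ℂ) =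
      ∑ a, ∑ b, B a b * (U ω b * (starRingEnd ℂ) (U ω a)) := by
    intro ω
    have h0 := Complex.nonneg_iff.1 (hB.dotProduct_mulVec_nonneg (U ω))
    rw [Matrix.neg_mulVec, dotProduct_neg, Complex.neg_re, abs_neg, abs_of_nonneg h0.1]
    have h1 : (((star (U ω) ⬝ᵥ B *ᵥ U ω).re : ℝ) : ℂ) = star (U ω) ⬝ᵥ B *ᵥ U ω :=
      Complex.ext (by simp) (by simpa using h0.2)
    rw [h1]
    simp only [dotProduct, Matrix.mulVec, Finset.mul_sum, Pi.star_apply, RCLike.star_def]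
    exact Finset.sum_congr rfl fun a _ => Finset.sum_congr rfl fun b _ => by ring
  simp only [h]
  refine (integral_finsetSum _ fun a _ =>
    integrable_finsetSum _ fun b _ => (hUint b a).const_mul (B a b)).trans ?_
  refine Finset.sum_congr rfl fun a _ => ?_
  refine (integral_finsetSum _ fun b _ => (hUint b a).const_mul (B a b)).trans ?_
  simp [integral_const_mul, hUcov]

/-- On positive semidefinite frequencies the law of `M` cannot be told apart from the point mass at
`-it`. The characters `exp (-i Tr (B X))` correspond to the frequency `-B` in the hypothesis. -/
lemma integral_char {P : Measure Ω} {U : Ω → Fin N → ℂ}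
    (hUint : ∀ a b : Fin N, Integrable (fun ω => U ω a * (starRingEnd ℂ) (U ω b)) P)
    (hUcov : ∀ a b : Fin N,
      ∫ ω, U ω a * (starRingEnd ℂ) (U ω b) ∂P = if a = b then 1 else 0)
    {M : Ω → Matrix (Fin N) (Fin N) ℂ} {t : ℝ}
    (hlaw : ∀ B : Matrix (Fin N) (Fin N) ℂ, B.IsHermitian →
      ∫ ω, Complex.exp (Complex.I * (B * M ω).trace) ∂P =
        Complex.exp (-(t : ℂ) *
          ((∫ ω, |(star (U ω) ⬝ᵥ B.mulVec (U ω)).re| ∂P : ℝ) : ℂ)))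
    (B : Matrix (Fin N) (Fin N) ℂ) (hB : B.PosSemidef) :
    ∫ ω, char B (M ω) ∂P = char B (-((Complex.I * t) • 1)) := by
  have h := hlaw (-B) hB.isHermitian.neg
  rw [integral_abs_form hUint hUcov hB] at h
  convert h using 1
  · simp [char]
  · rw [char, mul_neg, Matrix.trace_neg, Matrix.mul_smul, mul_one,
      Matrix.trace_smul, smul_eq_mul]
    congr 1
    linear_combination (t : ℂ) * B.trace * Complex.I_sq

end CauchyMatrix

theorem stmt19
    {Ω : Type*} [MeasurableSpace Ω] (P : Measure Ω) [IsProbabilityMeasure P]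
    (N : ℕ) (hN : 1 ≤ N) (t : ℝ) (ht : 0 < t)
    (U : Ω → Fin N → ℂ) (hUmeas : Measurable U)
    -- E[U U*] = I_N entrywise:
    (hUint : ∀ a b : Fin N, Integrable (fun ω => U ω a * (starRingEnd ℂ) (U ω b)) P)
    (hUcov : ∀ a b : Fin N,
      ∫ ω, U ω a * (starRingEnd ℂ) (U ω b) ∂P = if a = b then 1 else 0)
    -- M has the law P_U^{(C_t)} associated with the Cauchy law of parameter t:
    (M : Ω → Matrix (Fin N) (Fin N) ℂ) (hMmeas : Measurable M)
    (hHerm : ∀ ω, (M ω).IsHermitian)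
    (hlaw : ∀ B : Matrix (Fin N) (Fin N) ℂ, B.IsHermitian →
      ∫ ω, Complex.exp (Complex.I * (B * M ω).trace) ∂P =
        Complex.exp (-(t : ℂ) *
          ((∫ ω, |(star (U ω) ⬝ᵥ B.mulVec (U ω)).re| ∂P : ℝ) : ℂ))) :
    ∀ A : Matrix (Fin N) (Fin N) ℂ, A.IsHermitian → ∀ z : ℂ, 0 < z.im →
      (∀ᵐ ω ∂P, IsUnit (z • (1 : Matrix (Fin N) (Fin N) ℂ) - A - M ω)) ∧
      IsUnit ((z + Complex.I * t) • (1 : Matrix (Fin N) (Fin N) ℂ) - A) ∧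
      ∀ a b : Fin N,
        Integrable (fun ω => (z • (1 : Matrix (Fin N) (Fin N) ℂ) - A - M ω)⁻¹ a b) P ∧
        ∫ ω, (z • (1 : Matrix (Fin N) (Fin N) ℂ) - A - M ω)⁻¹ a b ∂P =
          ((z + Complex.I * t) • (1 : Matrix (Fin N) (Fin N) ℂ) - A)⁻¹ a b := by
  intro A hA z hz
  refine ⟨Eventually.of_forall fun ω => ?_, ?_, fun a b =>
    CauchyMatrix.integral_resolvent hA hz ht hMmeas hHerm
      (CauchyMatrix.integral_char hUint hUcov hlaw) a b⟩
  · rw [sub_sub]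
    exact CauchyMatrix.isUnit_smul_one_sub (hA.add (hHerm ω)) hz
  · exact CauchyMatrix.isUnit_smul_one_sub hA (by simpa using by positivity)

end
end
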